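/- arXiv:0708.2082 — 8 statements merged into one kernel-verified Lean document; each statement's English description precedes it below -/
import Mathlib

section
/- Let n,k be integers with k²−4n>0 not a perfect square, and let ξ=(−k+√(k²−4n))/2 be a root of x²+kx+n=0 (so the corresponding class of forms represents 1). Then the period of the regular continued fraction expansion of ξ is either of odd length and palindromic, or of even length and bipalindromic. -/
/-- Iterates of the Gauss map starting from `ξ`. -/
noncomputable def gaussIter (ξ : ℝ) : ℕ → ℝ
  | 0 => ξ
  | n + 1 => 1 / (gaussIter ξ n - (⌊gaussIter ξ n⌋ : ℝ))

/-- The `n`-th partial quotient of the regular continued fraction expansion of `ξ`. -/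
noncomputable def cfTerm (ξ : ℝ) (n : ℕ) : ℤ := ⌊gaussIter ξ n⌋

/-- The continued fraction expansion of `ξ` is periodic with period length `P` from index `N`. -/
def IsEventuallyPeriodicCF (ξ : ℝ) (N P : ℕ) : Prop :=
  1 ≤ P ∧ ∀ j : ℕ, cfTerm ξ (N + j + P) = cfTerm ξ (N + j)

/-- `s` is the (minimal) period of the eventually periodic regular continued fraction
expansion of `ξ`; it is well defined up to cyclic permutation. -/
def IsCFPeriod (s : List ℤ) (ξ : ℝ) : Prop :=
  s ≠ [] ∧
  (∃ N : ℕ, ∀ j : ℕ, cfTerm ξ (N + j) = s.getD (j % s.length) 0) ∧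
  (∀ P : ℕ, 1 ≤ P → (∃ N : ℕ, IsEventuallyPeriodicCF ξ N P) → s.length ≤ P)

/-- A finite sequence is palindromic if some cyclic permutation of it equals its reversal. -/
def Palindromic (s : List ℤ) : Prop := ∃ t : List ℤ, List.IsRotated s t ∧ t.reverse = t

/-- A finite sequence is bipalindromic if some cyclic permutation of it is the concatenation
of two palindrome blocks each of odd length. -/
def Bipalindromic (s : List ℤ) : Prop :=
  ∃ u v : List ℤ, List.IsRotated s (u ++ v) ∧ Odd u.length ∧ Odd v.length ∧
    u.reverse = u ∧ v.reverse = v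

/-- `y` is the conjugate of the irrational element `x` of `ℚ(d)`, where `d = √D`. -/
def ConjPair (d x y : ℝ) : Prop :=
  ∃ p q : ℚ, q ≠ 0 ∧ x = p + q * d ∧ y = p - q * d

lemma rat_indep {d : ℝ} (hd : Irrational d) {p q p' q' : ℚ}
    (h : (p : ℝ) + q * d = p' + q' * d) : p = p' ∧ q = q' := by
  have hq : q = q' := by
    by_contra hne
    have h1 : ((q - q' : ℚ) : ℝ) ≠ 0 := by
      exact_mod_cast sub_ne_zero.mpr hne
    apply hd
    refine ⟨(p' - p) / (q - q'), ?_⟩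
    push_cast at h1 ⊢
    rw [div_eq_iff h1]
    linarith
  subst hq
  refine ⟨?_, rfl⟩
  have : (p : ℝ) = p' := by linarith
  exact_mod_cast this

lemma ConjPair.unique {d : ℝ} (hd : Irrational d) {x y y' : ℝ}
    (h : ConjPair d x y) (h' : ConjPair d x y') : y = y' := by
  obtain ⟨p, q, -, hx, hy⟩ := h
  obtain ⟨p', q', -, hx', hy'⟩ := h'
  obtain ⟨rfl, rfl⟩ := rat_indep hd (hx.symm.trans hx')
  rw [hy, hy']

lemma ConjPair.symm {d x y : ℝ} (h : ConjPair d x y) : ConjPair d y x := by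
  obtain ⟨p, q, hq, hx, hy⟩ := h
  exact ⟨p, -q, neg_ne_zero.mpr hq, by push_cast; linarith, by push_cast; linarith⟩

lemma ConjPair.ne_int {d : ℝ} (hd : Irrational d) {x y : ℝ}
    (h : ConjPair d x y) (a : ℤ) : x - a ≠ 0 := by
  obtain ⟨p, q, hq, hx, -⟩ := h
  intro h0
  have : (p : ℝ) + q * d = ((a : ℚ) : ℝ) + ((0 : ℚ) : ℝ) * d := by
    push_cast; linarith
  exact hq (rat_indep hd this).2

lemma ConjPair.step {d : ℝ} (hd : Irrational d) (D : ℤ) (hD : d * d = D) {x y : ℝ}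
    (h : ConjPair d x y) (a : ℤ) : ConjPair d (1 / (x - a)) (1 / (y - a)) := by
  have hx0 := h.ne_int hd a
  have hy0 := h.symm.ne_int hd a
  obtain ⟨p, q, hq, hx, hy⟩ := h
  have hN : (x - a) * (y - a) = (((p - a) ^ 2 - q ^ 2 * D : ℚ) : ℝ) := by
    rw [hx, hy]; push_cast; rw [← hD]; ring
  have hN0 : ((p - a) ^ 2 - q ^ 2 * D : ℚ) ≠ 0 := by
    have := mul_ne_zero hx0 hy0
    rw [hN] at this
    exact_mod_cast this
  refine ⟨(p - a) / ((p - a) ^ 2 - q ^ 2 * D), -q / ((p - a) ^ 2 - q ^ 2 * D),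
    div_ne_zero (neg_ne_zero.mpr hq) hN0, ?_, ?_⟩
  · rw [Rat.cast_div, Rat.cast_div, ← hN]
    field_simp
    rw [hy]; push_cast; ring
  · rw [Rat.cast_div, Rat.cast_div, ← hN]
    field_simp
    rw [hx]; push_cast; ring

/-- one contraction step for continued fractions with common partial quotients -/
lemma cf_contract (x y : ℕ → ℝ) (a : ℕ → ℤ)
    (hx : ∀ n, x n = a n + 1 / x (n + 1)) (hy : ∀ n, y n = a n + 1 / y (n + 1))
    (ha : ∀ n, 1 ≤ a n) (hx1 : ∀ n, 1 < x n) (hy1 : ∀ n, 1 < y n) (n : ℕ) :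
    2 * |x n - y n| ≤ |x (n + 2) - y (n + 2)| := by
  have key : ∀ u v : ℝ, 1 < u → 1 < v → |1 / u - 1 / v| = |u - v| / (u * v) := by
    intro u v hu hv
    have : 1 / u - 1 / v = (v - u) / (u * v) := by field_simp
    rw [this, abs_div, abs_sub_comm, abs_of_pos (by positivity : 0 < u * v)]
  have e1 : ∀ n, |x n - y n| = |x (n + 1) - y (n + 1)| / (x (n + 1) * y (n + 1)) := by
    intro n
    rw [← key _ _ (hx1 _) (hy1 _), hx n, hy n]
    congr 1; ring
  have hprod : 2 ≤ (x (n + 1) * y (n + 1)) * (x (n + 2) * y (n + 2)) := by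
    have hX : 2 ≤ x (n + 1) * x (n + 2) := by
      have := hx1 (n + 2)
      have h2 : (1 : ℝ) ≤ a (n + 1) := by exact_mod_cast ha (n + 1)
      have : x (n + 1) * x (n + 2) = a (n + 1) * x (n + 2) + 1 := by
        rw [hx (n + 1)]; field_simp
      nlinarith
    have hY : 1 ≤ y (n + 1) * y (n + 2) := by
      nlinarith [hy1 (n + 1), hy1 (n + 2)]
    nlinarith
  have hA := hx1 (n + 1)
  have hB := hx1 (n + 2)
  have hC := hy1 (n + 1)
  have hE := hy1 (n + 2)
  rw [e1 n, e1 (n + 1), div_div]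
  rw [← mul_div_assoc, div_le_iff₀ (by positivity)]
  have := abs_nonneg (x (n + 2) - y (n + 2))
  have h3 := mul_le_mul_of_nonneg_left hprod this
  have h4 : x (n + 1 + 1) = x (n + 2) := rfl
  have h5 : y (n + 1 + 1) = y (n + 2) := rfl
  rw [h4, h5]
  nlinarith

lemma cf_unique (x y : ℕ → ℝ) (a : ℕ → ℤ)
    (hx : ∀ n, x n = a n + 1 / x (n + 1)) (hy : ∀ n, y n = a n + 1 / y (n + 1))
    (ha : ∀ n, 1 ≤ a n) (hx1 : ∀ n, 1 < x n) (hy1 : ∀ n, 1 < y n) : x 0 = y 0 := by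
  have bd : ∀ n, |x n - y n| ≤ 1 := by
    intro n
    have hb : ∀ u : ℝ, 1 < u → 0 < 1 / u ∧ 1 / u < 1 := by
      intro u hu
      exact ⟨by positivity, by rw [div_lt_one (by linarith)]; exact hu⟩
    have h1 := hb _ (hx1 (n + 1))
    have h2 := hb _ (hy1 (n + 1))
    rw [hx n, hy n, abs_le]
    constructor <;> linarith [h1.1, h1.2, h2.1, h2.2]
  have pw : ∀ m : ℕ, (2 : ℝ) ^ m * |x 0 - y 0| ≤ |x (2 * m) - y (2 * m)| := by
    intro m
    induction m with
    | zero => simp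
    | succ m ih =>
      have := cf_contract x y a hx hy ha hx1 hy1 (2 * m)
      have e : 2 * (m + 1) = 2 * m + 2 := by ring
      rw [e, pow_succ]
      linarith
  by_contra hne
  have hpos : 0 < |x 0 - y 0| := abs_pos.mpr (sub_ne_zero.mpr hne)
  obtain ⟨m, hm⟩ := pow_unbounded_of_one_lt (1 / |x 0 - y 0|) (by norm_num : (1 : ℝ) < 2)
  rw [div_lt_iff₀ hpos] at hm
  linarith [pw m, bd (2 * m)]

/-- If `a + 1/u = b + 1/v` with `u, v > 1`, then `a = b` and `u = v`. -/
lemma int_add_inv_inj {a b : ℤ} {u v : ℝ} (hu : 1 < u) (hv : 1 < v)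
    (h : (a : ℝ) + 1 / u = b + 1 / v) : a = b ∧ u = v := by
  have hb : ∀ (c : ℤ) (w : ℝ), 1 < w → ⌊(c : ℝ) + 1 / w⌋ = c := by
    intro c w hw
    rw [Int.floor_eq_iff]
    have h1 : 0 < 1 / w := by positivity
    have h2 : 1 / w < 1 := by rw [div_lt_one (by linarith)]; exact hw
    constructor <;> linarith
  have hab : a = b := by rw [← hb a u hu, h, hb b v hv]
  subst hab
  refine ⟨rfl, ?_⟩
  have h1 : 1 / u = 1 / v := by linarith
  rw [one_div, one_div] at h1
  exact inv_injective h1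

lemma list_part (s : List ℤ) (a : ℕ → ℤ) (N : ℕ) (hs : s ≠ [])
    (hN : ∀ j, a (N + j) = s.getD (j % s.length) 0)
    (hper : ∀ i, 1 ≤ i → a (i + s.length) = a i)
    (hsym : ∀ i, 1 ≤ i → i < s.length → a (s.length - i) = a i) :
    (Odd s.length ∧ Palindromic s) ∨ (Even s.length ∧ Bipalindromic s) := by
  obtain ⟨P, hP⟩ : ∃ P, P = s.length := ⟨_, rfl⟩
  have hP1 : 1 ≤ P := by
    have := List.length_pos_iff.mpr hs
    omega
  rw [← hP] at hN hper hsym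
  have hperm : ∀ m i, 1 ≤ i → a (i + m * P) = a i := by
    intro m
    induction m with
    | zero => intro i _; simp
    | succ m ih =>
      intro i hi
      rw [add_mul, one_mul, ← add_assoc, hper _ (by omega), ih i hi]
  have hsymm : ∀ i j, 1 ≤ i → 1 ≤ j → P ∣ i + j → a i = a j := by
    intro i j hi hj hd
    have hi2 := Nat.mod_add_div i P
    have hj2 := Nat.mod_add_div j P
    have hiP := Nat.mod_lt i hP1
    have hjP := Nat.mod_lt j hP1
    have hd2 : (i % P + j % P) % P = 0 := by
      rw [← Nat.add_mod]; exact Nat.mod_eq_zero_of_dvd hd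
    by_cases h0 : i % P = 0
    · have hj0 : j % P = 0 := by
        rw [h0, zero_add, Nat.mod_mod] at hd2; exact hd2
      have aux : ∀ i, 1 ≤ i → i % P = 0 → a i = a P := by
        intro i hi h
        obtain ⟨c, rfl⟩ := Nat.dvd_of_mod_eq_zero h
        obtain ⟨c, rfl⟩ : ∃ e, c = e + 1 := ⟨c - 1, by
          rcases c with _ | c
          · simp at hi
          · simp⟩
        rw [← hperm c P hP1]; congr 1; ring
      rw [aux i hi h0, aux j hj hj0]
    · have hsum : i % P + j % P = P := by
        obtain ⟨c, hc⟩ := Nat.dvd_of_mod_eq_zero hd2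
        have : c = 1 := by
          rcases c with _ | _ | c
          · omega
          · rfl
          · exfalso
            have : P * (c + 1 + 1) = P * c + 2 * P := by ring
            have h3 := Nat.zero_le (P * c)
            omega
        rw [hc, this, mul_one]
      have ei : a i = a (i % P) := by
        conv_lhs => rw [← hi2, mul_comm]
        exact hperm _ _ (by omega)
      have ej : a j = a (j % P) := by
        conv_lhs => rw [← hj2, mul_comm]
        exact hperm _ _ (by omega)
      rw [ei, ej, ← hsym (i % P) (by omega) hiP]
      congr 1; omega
  have hrot : ∀ st, 1 ≤ st → List.IsRotated s ((List.range P).map (fun i => a (st + i))) := by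
    intro st hst
    have hNP : N ≤ N * P := Nat.le_mul_of_pos_right N hP1
    refine ⟨st + N * P - N, ?_⟩
    apply List.ext_getElem
    · simp [hP]
    · intro i h1 h2
      rw [List.getElem_rotate]
      simp only [List.getElem_map, List.getElem_range]
      have h := hN (i + (st + N * P - N))
      have e : N + (i + (st + N * P - N)) = (st + i) + N * P := by omega
      rw [e, hperm _ _ (by omega)] at h
      rw [h, List.getD_eq_getElem _ _ (by rw [← hP]; exact Nat.mod_lt _ hP1)]
      simp only [hP]
  have hrev : ∀ st L, 1 ≤ st → P ∣ 2 * st + (L - 1) →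
      ((List.range L).map (fun i => a (st + i))).reverse =
        (List.range L).map (fun i => a (st + i)) := by
    intro st L hst hd
    apply List.ext_getElem
    · simp
    · intro i h1 h2
      simp only [List.length_map, List.length_range] at h2
      simp only [List.getElem_reverse, List.getElem_map, List.getElem_range, List.length_map,
        List.length_range]
      apply hsymm _ _ (by omega) (by omega)
      have : st + (L - 1 - i) + (st + i) = 2 * st + (L - 1) := by omega
      rw [this]; exact hd
  rw [← hP]
  rcases Nat.even_or_odd P with he | ho
  · right
    refine ⟨he, [a P], (List.range (P - 1)).map (fun i => a (P + 1 + i)), ?_, by simp, ?_,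
      by simp, ?_⟩
    · have := hrot P hP1
      obtain ⟨Q, rfl⟩ : ∃ Q, P = Q + 1 := ⟨P - 1, by omega⟩
      rw [List.range_succ_eq_map] at this
      simp only [List.map_cons, List.map_map] at this
      convert this using 2
      simp only [Nat.add_sub_cancel, List.cons_append, List.nil_append, Nat.add_zero]
      congr 1
      apply List.map_congr_left
      intro i _
      simp only [Function.comp]
      congr 1; omega
    · simp only [List.length_map, List.length_range]
      obtain ⟨m, hm⟩ := he
      exact ⟨m - 1, by omega⟩
    · apply hrev _ _ (by omega)
      obtain ⟨m, hm⟩ := he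
      exact ⟨3, by omega⟩
  · left
    refine ⟨ho, _, hrot ((P + 1) / 2) (by omega), hrev _ _ (by omega) ?_⟩
    obtain ⟨m, hm⟩ := ho
    exact ⟨2, by omega⟩

/-- The sequence `z_{n+1} = -1 / conj (x_{n+1})`. -/
noncomputable def dualSeq (a : ℕ → ℤ) (z0 : ℝ) : ℕ → ℝ
  | 0 => z0
  | n + 1 => a (n + 1) + 1 / dualSeq a z0 n

lemma core (d : ℝ) (hd : Irrational d) (D : ℤ) (hD : d * d = D) (hd2 : 2 < d) (k : ℤ)
    (ξ : ℝ) (hξ : ξ = (-(k : ℝ) + d) / 2) (P N : ℕ) (hP : 1 ≤ P)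
    (hN : ∀ j, cfTerm ξ (N + j + P) = cfTerm ξ (N + j)) :
    (∀ i, 1 ≤ i → cfTerm ξ (i + P) = cfTerm ξ i) ∧
    (∀ i, 1 ≤ i → i < P → cfTerm ξ (P - i) = cfTerm ξ i) := by
  set x := gaussIter ξ with hxdef
  set a := cfTerm ξ with hadef
  have ha : ∀ n, a n = ⌊x n⌋ := fun n => rfl
  have hxs : ∀ n, x (n + 1) = 1 / (x n - a n) := fun n => rfl
  set z := dualSeq a (a 0 - (-(k : ℝ) - d) / 2) with hz
  have hz0 : z 0 = a 0 - (-(k : ℝ) - d) / 2 := rfl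
  have hzs : ∀ n, z (n + 1) = a (n + 1) + 1 / z n := fun n => rfl
  have c0 : ConjPair d (x 0) ((-(k : ℝ) - d) / 2) := by
    refine ⟨-k / 2, 1 / 2, by norm_num, ?_, ?_⟩
    · change ξ = _
      rw [hξ]; push_cast; ring
    · push_cast; ring
  have hc : ∀ n, ConjPair d (x (n + 1)) (-(1 / z n)) := by
    intro n
    induction n with
    | zero =>
      have := c0.step hd D hD (a 0)
      rw [← hxs] at this
      convert this using 1
      rw [hz0, ← one_div_neg_eq_neg_one_div, neg_sub]
    | succ n ih =>
      have := ih.step hd D hD (a (n + 1))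
      rw [← hxs] at this
      convert this using 1
      rw [hzs, ← one_div_neg_eq_neg_one_div]
      congr 1; ring
  have hne : ∀ n, x n - a n ≠ 0 := by
    intro n
    rcases n with _ | n
    · exact c0.ne_int hd _
    · exact (hc n).ne_int hd _
  have hfr : ∀ n, 0 < x n - a n ∧ x n - a n < 1 := by
    intro n
    have h1 := Int.floor_le (x n)
    have h2 := Int.lt_floor_add_one (x n)
    rw [← ha] at h1 h2
    exact ⟨lt_of_le_of_ne (by linarith) (hne n).symm, by linarith⟩
  have hx1 : ∀ n, 1 < x (n + 1) := by
    intro n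
    rw [hxs, lt_div_iff₀ (hfr n).1]
    linarith [(hfr n).2]
  have ha1 : ∀ n, 1 ≤ a (n + 1) := by
    intro n
    rw [ha, Int.le_floor]
    exact_mod_cast (hx1 n).le
  have hxr : ∀ n, x n = a n + 1 / x (n + 1) := by
    intro n
    rw [hxs, one_div_one_div]; ring
  have hz1 : ∀ n, 1 < z n := by
    intro n
    induction n with
    | zero =>
      have h := (hfr 0).2
      have h0 : x 0 = ξ := rfl
      rw [h0, hξ] at h
      rw [hz0]
      linarith
    | succ n ih =>
      rw [hzs]
      have h1 : (1 : ℝ) ≤ a (n + 1) := by exact_mod_cast ha1 n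
      have : 0 < 1 / z n := by positivity
      linarith
  -- equality of complete quotients
  have hxN : x (N + 1) = x (N + P + 1) := by
    apply cf_unique (fun j => x (N + 1 + j)) (fun j => x (N + P + 1 + j))
      (fun j => a (N + 1 + j))
    · intro n; exact hxr _
    · intro n
      have := hN (1 + n)
      have e1 : N + (1 + n) + P = N + P + 1 + n := by omega
      have e2 : N + (1 + n) = N + 1 + n := by omega
      rw [e1, e2] at this
      rw [← this]; exact hxr _
    · intro n
      have := ha1 (N + n)
      convert this using 2; omega
    · intro n
      have := hx1 (N + n)
      convert this using 2; omega
    · intro n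
      have := hx1 (N + P + n)
      convert this using 2; omega
  have hzx : ∀ m n, z m = z n → x (m + 1) = x (n + 1) := by
    intro m n h
    have h1 := (hc m).symm
    rw [h] at h1
    exact h1.unique hd (hc n).symm
  have hzN : z N = z (N + P) := by
    have h1 := hc N
    rw [hxN] at h1
    have := h1.unique hd (hc (N + P))
    have h2 := neg_injective this
    rw [one_div, one_div] at h2
    exact inv_injective h2
  have hzdown : ∀ m n i, z (m + i) = z (n + i) → z m = z n := by
    intro m n i
    induction i with
    | zero => exact id
    | succ i ih =>
      intro h
      apply ih
      rw [← add_assoc, ← add_assoc, hzs, hzs] at h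
      exact (int_add_inv_inj (hz1 _) (hz1 _) h).2
  have hz0P : z 0 = z P := by
    apply hzdown 0 P N
    rw [zero_add, add_comm P N]; exact hzN
  have hxP : ∀ i, x (i + 1) = x (i + 1 + P) := by
    intro i
    induction i with
    | zero =>
      have := hzx _ _ hz0P
      rw [this]; congr 1; omega
    | succ i ih =>
      have e : i + 1 + 1 + P = (i + 1 + P) + 1 := by omega
      rw [e, hxs (i + 1), hxs (i + 1 + P), ha, ha, ih]
  refine ⟨?_, ?_⟩
  · intro i hi
    obtain ⟨j, rfl⟩ : ∃ j, i = j + 1 := ⟨i - 1, by omega⟩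
    rw [ha, ha, ← hxP]
  obtain ⟨Q, rfl⟩ : ∃ Q, P = Q + 1 := ⟨P - 1, by omega⟩
  have hrefl : ∀ i, i ≤ Q → z (Q - i) = x (i + 1) := by
    intro i
    induction i with
    | zero =>
      intro _
      have h1 : ((a (Q + 1) : ℤ) : ℝ) + 1 / z Q = ((2 * a 0 + k : ℤ) : ℝ) + 1 / x 1 := by
        rw [← hzs, ← hz0P, hz0]
        have h0 : x 0 = ξ := rfl
        have h2 := hxr 0
        rw [h0, hξ] at h2
        push_cast
        linarith
      exact (int_add_inv_inj (hz1 _) (hx1 0) h1).2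
    | succ i ih =>
      intro hi
      have h := ih (by omega)
      have e : Q - i = (Q - (i + 1)) + 1 := by omega
      rw [e, hzs, hxr (i + 1)] at h
      exact (int_add_inv_inj (hz1 _) (hx1 _) h).2
  intro i hi hiQ
  obtain ⟨j, rfl⟩ : ∃ j, i = j + 1 := ⟨i - 1, by omega⟩
  have h := hrefl j (by omega)
  have e : Q - j = (Q - (j + 1)) + 1 := by omega
  rw [e, hzs, hxr (j + 1)] at h
  have := (int_add_inv_inj (hz1 _) (hx1 _) h).1
  rw [← this]; congr 1; omega

/-- The continued fraction of a root of `x^2 + k*x + n = 0` (whose class of forms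
represents 1) has period either odd and palindromic, or even and bipalindromic. -/
theorem statement9 (n k : ℤ)
    (hpos : 0 < k ^ 2 - 4 * n) (hsq : ¬ IsSquare (k ^ 2 - 4 * n)) :
    ∀ s : List ℤ,
      IsCFPeriod s ((-(k : ℝ) + Real.sqrt ((k ^ 2 - 4 * n : ℤ) : ℝ)) / 2) →
      (Odd s.length ∧ Palindromic s) ∨ (Even s.length ∧ Bipalindromic s) := by
  intro s hs
  obtain ⟨hne, ⟨N, hN⟩, -⟩ := hs
  have hlen : 1 ≤ s.length := List.length_pos_iff.mpr hne
  set D : ℤ := k ^ 2 - 4 * n with hDdef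
  have hD5 : 4 < D := by
    by_contra hle
    have h1 : D % 4 = 0 ∨ D % 4 = 1 := by
      have hk : k ^ 2 % 4 = 0 ∨ k ^ 2 % 4 = 1 := by
        rcases Int.even_or_odd' k with ⟨m, rfl | rfl⟩
        · left; ring_nf; omega
        · right; ring_nf; omega
      omega
    have h2 : D = 1 ∨ D = 4 := by omega
    rcases h2 with h | h
    · exact hsq ⟨1, by rw [h]; norm_num⟩
    · exact hsq ⟨2, by rw [h]; norm_num⟩
  have hDr : (4 : ℝ) < (D : ℝ) := by exact_mod_cast hD5
  have hirr : Irrational (Real.sqrt (D : ℝ)) :=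
    irrational_sqrt_intCast_iff.mpr ⟨hsq, hpos.le⟩
  have hdd : Real.sqrt (D : ℝ) * Real.sqrt (D : ℝ) = (D : ℝ) :=
    Real.mul_self_sqrt (by linarith)
  have hd2 : 2 < Real.sqrt (D : ℝ) := by
    rw [Real.lt_sqrt (by norm_num)]; linarith
  have hper : ∀ j, cfTerm ((-(k : ℝ) + Real.sqrt (D : ℝ)) / 2) (N + j + s.length) =
      cfTerm ((-(k : ℝ) + Real.sqrt (D : ℝ)) / 2) (N + j) := by
    intro j
    rw [add_assoc, hN, hN, Nat.add_mod_right]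
  obtain ⟨h1, h2⟩ := core _ hirr D hdd hd2 k _ rfl s.length N hlen hper
  exact list_part s _ N hne hN h1 h2
end

section
/- Let p,q be positive integers such that p/q is not the square of a rational number. Then the period of the regular continued fraction expansion of √(p/q) is either of odd length and palindromic, or bipalindromic. -/
theorem gi_irr {ξ : ℝ} (h : Irrational ξ) (n : ℕ) : Irrational (gaussIter ξ n) := by
  induction n with
  | zero => exact h
  | succ n ih =>
    have := (ih.sub_intCast ⌊gaussIter ξ n⌋).inv
    simpa [gaussIter] using this

theorem gi_succ (ξ : ℝ) (n : ℕ) :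
    gaussIter ξ (n+1) = 1 / (gaussIter ξ n - (cfTerm ξ n : ℝ)) := rfl

theorem gi_frac {ξ : ℝ} (h : Irrational ξ) (n : ℕ) :
    0 < gaussIter ξ n - (cfTerm ξ n : ℝ) ∧ gaussIter ξ n - (cfTerm ξ n : ℝ) < 1 := by
  unfold cfTerm
  have h1 := Int.floor_le (gaussIter ξ n)
  have h2 := Int.lt_floor_add_one (gaussIter ξ n)
  have h3 := (gi_irr h n).ne_int ⌊gaussIter ξ n⌋
  refine ⟨?_, by linarith⟩
  have := lt_of_le_of_ne h1 (Ne.symm h3)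
  linarith

theorem gi_gt {ξ : ℝ} (h : Irrational ξ) (n : ℕ) : 1 < gaussIter ξ (n+1) := by
  obtain ⟨h1, h2⟩ := gi_frac h n
  rw [gi_succ]
  exact (one_lt_div h1).2 h2

theorem cf_pos {ξ : ℝ} (h : Irrational ξ) (n : ℕ) : 1 ≤ cfTerm ξ (n+1) := by
  unfold cfTerm
  exact Int.le_floor.2 (by simpa using (gi_gt h n).le)

theorem gi_shift (ξ : ℝ) (m n : ℕ) : gaussIter (gaussIter ξ m) n = gaussIter ξ (m+n) := by
  induction n with
  | zero => rfl
  | succ n ih => rw [← add_assoc, gaussIter, gaussIter, ih]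

theorem cf_shift (ξ : ℝ) (m n : ℕ) : cfTerm (gaussIter ξ m) n = cfTerm ξ (m+n) := by
  unfold cfTerm; rw [gi_shift]

/-- one step of contraction -/
theorem contr1 {f g x y : ℝ} (hf : 0 < f) (hg : 0 < g) (hx : x = 1 / f) (hy : y = 1 / g) :
    |f - g| = f * g * |x - y| := by
  subst hx hy
  have : (1 / f - 1 / g) = -(f - g) / (f * g) := by field_simp; ring
  rw [this, abs_div, abs_neg, abs_of_pos (mul_pos hf hg)]
  field_simp

theorem half_bound {f g : ℝ} {a : ℤ} (ha : 1 ≤ a) (hf : 0 < f) (hg : 0 < g) (hg1 : g < 1)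
    (h : g = 1 / f - a) : f * g ≤ 1 / 2 := by
  have ha' : (1:ℝ) ≤ a := by exact_mod_cast ha
  have h1 : f * (a + g) = 1 := by rw [h]; field_simp; ring
  nlinarith [mul_pos hf hg]

theorem cf_dist {ξ η : ℝ} (h : Irrational ξ) (h' : Irrational η)
    (he : ∀ n, cfTerm ξ n = cfTerm η n) (k : ℕ) : ∀ n,
    |gaussIter ξ n - gaussIter η n| ≤ (1 / 4) ^ k := by
  induction k with
  | zero =>
    intro n
    obtain ⟨h1, h2⟩ := gi_frac h n
    obtain ⟨h3, h4⟩ := gi_frac h' n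
    rw [he n] at h1 h2
    rw [abs_le]; constructor <;> simp <;> linarith
  | succ k ih =>
    intro n
    obtain ⟨h1, h2⟩ := gi_frac h n
    obtain ⟨h3, h4⟩ := gi_frac h' n
    obtain ⟨h5, h6⟩ := gi_frac h (n+1)
    obtain ⟨h7, h8⟩ := gi_frac h' (n+1)
    have e1 := contr1 h1 h3 (gi_succ ξ n) (gi_succ η n)
    have e2 := contr1 h5 h7 (gi_succ ξ (n+1)) (gi_succ η (n+1))
    have b1 := half_bound (cf_pos h n) h1 h5 h6 (by rw [gi_succ])
    have b2 := half_bound (cf_pos h' n) h3 h7 h8 (by rw [gi_succ])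
    have e3 : ∀ m, gaussIter ξ m - (cfTerm ξ m : ℝ) - (gaussIter η m - (cfTerm η m : ℝ))
      = gaussIter ξ m - gaussIter η m := by intro m; rw [he m]; ring
    rw [e3] at e1 e2
    have i := ih (n+1+1)
    rw [e1, e2]
    set f := gaussIter ξ n - (cfTerm ξ n : ℝ)
    set g := gaussIter η n - (cfTerm η n : ℝ)
    set f' := gaussIter ξ (n+1) - (cfTerm ξ (n+1) : ℝ)
    set g' := gaussIter η (n+1) - (cfTerm η (n+1) : ℝ)
    calc f * g * (f' * g' * |gaussIter ξ (n+1+1) - gaussIter η (n+1+1)|)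
        = (f * f') * (g * g') * |gaussIter ξ (n+1+1) - gaussIter η (n+1+1)| := by ring
      _ ≤ (1/2) * (1/2) * (1/4)^k := by gcongr
      _ = (1/4)^(k+1) := by ring

theorem cf_inj {ξ η : ℝ} (h : Irrational ξ) (h' : Irrational η)
    (he : ∀ n, cfTerm ξ n = cfTerm η n) : ξ = η := by
  have h0 : ∀ k, |ξ - η| ≤ (1/4)^k := fun k => cf_dist h h' he k 0
  have ht : Filter.Tendsto (fun k : ℕ => ((1:ℝ)/4)^k) Filter.atTop (nhds 0) :=
    tendsto_pow_atTop_nhds_zero_of_lt_one (by norm_num) (by norm_num)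
  have := ge_of_tendsto' ht h0
  have := abs_nonpos_iff.1 this
  linarith

/-- negated conjugates -/
noncomputable def wIter (ξ : ℝ) : ℕ → ℝ
  | 0 => ξ
  | n + 1 => 1 / (wIter ξ n + (cfTerm ξ n : ℝ))

theorem w_conj {ξ : ℝ} {d : ℚ} (hd : ξ ^ 2 = d) (h : Irrational ξ) (n : ℕ) :
    ∃ u v : ℚ, gaussIter ξ n = u + v * ξ ∧ wIter ξ n = -(u - v * ξ) := by
  induction n with
  | zero => exact ⟨0, 1, by simp [gaussIter], by simp [wIter]⟩
  | succ n ih =>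
    obtain ⟨u, v, h1, h2⟩ := ih
    obtain ⟨f1, -⟩ := gi_frac h n
    rw [gi_succ, wIter]
    generalize cfTerm ξ n = a at *
    rw [h1] at f1 ⊢
    rw [h2]
    have hne : (u:ℝ) + v * ξ - a ≠ 0 := f1.ne'
    have hne2 : (u:ℝ) - v * ξ - a ≠ 0 := by
      intro h0
      by_cases hv : v = 0
      · subst hv; simp at h0 hne; exact hne h0
      · apply h
        refine ⟨(u - a) / v, ?_⟩
        have hv' : (v:ℝ) ≠ 0 := by exact_mod_cast hv
        push_cast
        field_simp
        linarith
    have hne3 : -((u:ℝ) - v * ξ) + a ≠ 0 := by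
      intro h0; apply hne2; linarith
    have hN : ((u:ℝ) - a)^2 - v^2 * d = (u + v * ξ - a) * (u - v * ξ - a) := by
      rw [← hd]; ring
    have hN0 : ((u:ℝ) - a)^2 - v^2 * d ≠ 0 := by
      rw [hN]; exact mul_ne_zero hne hne2
    refine ⟨(u - a) / ((u - a)^2 - v^2 * d), -v / ((u - a)^2 - v^2 * d), ?_, ?_⟩
    · push_cast
      rw [div_mul_eq_mul_div, ← add_div, div_eq_div_iff hne hN0, hN]; ring
    · push_cast
      rw [div_mul_eq_mul_div, ← sub_div, ← neg_div, div_eq_div_iff hne3 hN0, hN]; ring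

theorem conj_unique {ξ : ℝ} (h : Irrational ξ) {u v u' v' : ℚ}
    (e : (u:ℝ) + v * ξ = u' + v' * ξ) : -((u:ℝ) - v * ξ) = -(u' - v' * ξ) := by
  by_cases hv : v = v'
  · subst hv; linarith
  · exfalso; apply h
    refine ⟨(u' - u) / (v - v'), ?_⟩
    have hv' : (v:ℝ) - v' ≠ 0 := by
      rw [sub_ne_zero]; exact_mod_cast hv
    push_cast
    field_simp
    linarith

theorem int_frac_unique {a b : ℤ} {x y : ℝ} (hx : 0 < x) (hx1 : x < 1) (hy : 0 < y) (hy1 : y < 1)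
    (e : (a:ℝ) + x = b + y) : a = b ∧ x = y := by
  have h1 : a < b + 1 := by exact_mod_cast (by push_cast; linarith : (a:ℝ) < (b + 1 : ℤ))
  have h2 : b < a + 1 := by exact_mod_cast (by push_cast; linarith : (b:ℝ) < (a + 1 : ℤ))
  have : a = b := by omega
  subst this
  exact ⟨rfl, by linarith⟩

theorem w_bd {ξ : ℝ} (h : Irrational ξ) (h1 : 1 < ξ) (n : ℕ) :
    0 < wIter ξ n ∧ (1 ≤ n → wIter ξ n < 1) ∧ 1 ≤ cfTerm ξ n := by
  induction n with
  | zero =>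
    refine ⟨by simp [wIter]; linarith, by simp, ?_⟩
    unfold cfTerm
    exact Int.le_floor.2 (by simpa [gaussIter] using h1.le)
  | succ n ih =>
    obtain ⟨i1, -, i3⟩ := ih
    have i3' : (1:ℝ) ≤ cfTerm ξ n := by exact_mod_cast i3
    refine ⟨?_, fun _ => ?_, cf_pos h n⟩
    · rw [wIter]; positivity
    · rw [wIter, div_lt_one (by linarith)]; linarith

theorem w_inv {ξ : ℝ} (n : ℕ) : 1 / wIter ξ (n+1) = cfTerm ξ n + wIter ξ n := by
  rw [wIter, one_div_one_div, add_comm]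

theorem w_per {ξ : ℝ} {d : ℚ} (hd : ξ ^ 2 = d) (h : Irrational ξ) (h1 : 1 < ξ) {N L : ℕ}
    (hper : ∀ j, cfTerm ξ (N + j + L) = cfTerm ξ (N + j)) (n : ℕ) (hn : 1 ≤ n) :
    wIter ξ (n + L) = wIter ξ n ∧ cfTerm ξ (n + L) = cfTerm ξ n := by
  have big : ∀ n, N ≤ n → wIter ξ (n + L) = wIter ξ n ∧ cfTerm ξ (n + L) = cfTerm ξ n := by
    intro n hn
    obtain ⟨j, rfl⟩ := Nat.exists_eq_add_of_le hn
    refine ⟨?_, hper j⟩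
    have e : gaussIter ξ (N + j + L) = gaussIter ξ (N + j) := by
      apply cf_inj (gi_irr h _) (gi_irr h _)
      intro k
      rw [cf_shift, cf_shift]
      have := hper (j + k)
      rw [show N + j + L + k = N + (j + k) + L by ring, this, add_assoc]
    obtain ⟨u, v, a1, a2⟩ := w_conj hd h (N + j + L)
    obtain ⟨u', v', b1, b2⟩ := w_conj hd h (N + j)
    rw [a2, b2]
    apply conj_unique h
    rw [← a1, ← b1, e]
  by_cases hN : N ≤ n
  · exact big n hN
  · have hN' : n ≤ N := by omega
    induction hN' using Nat.decreasingInduction with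
    | self => exact big N le_rfl
    | of_succ k hk ih =>
      have ih' : wIter ξ (k + 1 + L) = wIter ξ (k + 1) := by
        by_cases hh : N ≤ k + 1
        · exact (big _ hh).1
        · exact (ih (by omega) hh).1
      have e1 := w_inv (ξ := ξ) k
      have e2 := w_inv (ξ := ξ) (k + L)
      rw [show k + L + 1 = k + 1 + L by ring, ih', e1] at e2
      obtain ⟨p1, p2, -⟩ := w_bd h h1 k
      obtain ⟨q1, q2, -⟩ := w_bd h h1 (k + L)
      obtain ⟨r1, r2⟩ := int_frac_unique p1 (p2 hn) q1 (q2 (by omega)) e2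
      exact ⟨r2.symm, r1.symm⟩

theorem cf_symm {ξ : ℝ} {d : ℚ} (hd : ξ ^ 2 = d) (h : Irrational ξ) (h1 : 1 < ξ) {N L : ℕ}
    (hL : 1 ≤ L)
    (hper : ∀ j, cfTerm ξ (N + j + L) = cfTerm ξ (N + j)) (k : ℕ) (hk : k < L) :
    (1 ≤ k → cfTerm ξ (L - k) = cfTerm ξ k) ∧
      wIter ξ (L - k) = gaussIter ξ k - (cfTerm ξ k : ℝ) := by
  induction k with
  | zero =>
    refine ⟨by simp, ?_⟩
    have e := (w_per hd h h1 hper 1 le_rfl).1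
    have e1 := w_inv (ξ := ξ) L
    have e2 := w_inv (ξ := ξ) 0
    rw [add_comm L 1, e] at e1
    rw [zero_add, e1] at e2
    obtain ⟨p1, p2, -⟩ := w_bd h h1 L
    obtain ⟨q1, q2⟩ := gi_frac h 0
    have e3 : ((cfTerm ξ L : ℤ) : ℝ) + wIter ξ L
        = ((2 * cfTerm ξ 0 : ℤ) : ℝ) + (gaussIter ξ 0 - (cfTerm ξ 0 : ℝ)) := by
      rw [e2]; simp only [wIter, gaussIter]; push_cast; ring
    exact (int_frac_unique p1 (p2 hL) q1 q2 e3).2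
  | succ k ih =>
    obtain ⟨-, ih⟩ := ih (by omega)
    have e1 := w_inv (ξ := ξ) (L - (k + 1))
    rw [show L - (k + 1) + 1 = L - k by omega, ih, ← gi_succ] at e1
    obtain ⟨p1, p2, -⟩ := w_bd h h1 (L - (k + 1))
    obtain ⟨q1, q2⟩ := gi_frac h (k + 1)
    obtain ⟨r1, r2⟩ := int_frac_unique (a := cfTerm ξ (L - (k+1))) (b := cfTerm ξ (k+1))
      p1 (p2 (by omega)) q1 q2 (by rw [← e1]; ring)
    exact ⟨fun _ => r1, r2⟩

theorem window_comb (a : ℕ → ℤ) (L N : ℕ) (hL : 1 ≤ L) (hN : 1 ≤ N) (s : List ℤ)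
    (hs : s = (List.range L).map (fun i => a (N + i)))
    (per : ∀ n, 1 ≤ n → a (n + L) = a n)
    (sym : ∀ k, 1 ≤ k → k < L → a (L - k) = a k) :
    (Odd s.length ∧ Palindromic s) ∨ Bipalindromic s := by
  have hlen : s.length = L := by simp [hs]
  have perm : ∀ t n, 1 ≤ n → a (n + L * t) = a n := by
    intro t
    induction t with
    | zero => simp
    | succ t ih =>
      intro n hn
      rw [show n + L * (t + 1) = (n + L * t) + L by ring, per _ (by omega), ih n hn]
  have rot : ∀ m r, 1 ≤ m → ((List.range L).map (fun i => a (m + i))).rotate r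
      = (List.range L).map (fun i => a (m + r + i)) := by
    intro m r hm
    apply List.ext_getElem
    · simp
    · intro i h1 h2
      simp only [List.getElem_rotate, List.getElem_map, List.getElem_range, List.length_map,
        List.length_range]
      have := perm ((i + r) / L) (m + (i + r) % L) (by omega)
      rw [← this, add_assoc m, Nat.mod_add_div]
      congr 1; ring
  have w1 : ∀ m, 1 ≤ m → List.IsRotated s ((List.range L).map (fun i => a (m + i))) := by
    intro m hm
    have A : List.IsRotated ((List.range L).map (fun i => a (1 + i))) s :=
      ⟨N - 1, by rw [rot 1 _ le_rfl, hs, Nat.add_sub_cancel' hN]⟩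
    have B : List.IsRotated ((List.range L).map (fun i => a (1 + i)))
        ((List.range L).map (fun i => a (m + i))) :=
      ⟨m - 1, by rw [rot 1 _ le_rfl, Nat.add_sub_cancel' hm]⟩
    exact A.symm.trans B
  rcases Nat.even_or_odd L with he | ho
  · right
    refine ⟨(List.range (L - 1)).map (fun i => a (1 + i)), [a L], ?_, ?_, by simp, ?_, by simp⟩
    · have := w1 1 le_rfl
      have e : (List.range L).map (fun i => a (1 + i))
          = (List.range (L - 1)).map (fun i => a (1 + i)) ++ [a L] := by
        obtain ⟨M, rfl⟩ := Nat.exists_eq_add_of_le' hL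
        rw [List.range_succ]; simp [add_comm]
      rwa [e] at this
    · simp only [List.length_map, List.length_range]
      exact Nat.Even.sub_odd hL he odd_one
    · apply List.ext_getElem
      · simp
      · intro i h1 h2
        simp only [List.length_map, List.length_range] at h2
        simp only [List.getElem_reverse, List.getElem_map, List.getElem_range, List.length_map,
          List.length_range]
        rw [← sym (1 + i) (by omega) (by omega)]
        congr 1; omega
  · left
    refine ⟨by rwa [hlen], ?_⟩
    obtain ⟨m, hm⟩ := ho
    refine ⟨_, w1 (m + 1) (by omega), ?_⟩
    have key : ∀ i j, 1 ≤ i → i ≤ j → i + j = 2 * L → a i = a j := by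
      intro i j hi hij hs
      by_cases hiL : i = L
      · have : j = L := by omega
        rw [hiL, this]
      · have := per (L - i) (by omega)
        rw [sym i hi (by omega)] at this
        rw [← this]; congr 1; omega
    apply List.ext_getElem
    · simp
    · intro i h1 h2
      simp only [List.length_map, List.length_range] at h2
      simp only [List.getElem_reverse, List.getElem_map, List.getElem_range, List.length_map,
          List.length_range]
      rcases le_total (m + 1 + (L - 1 - i)) (m + 1 + i) with hh | hh
      · exact key _ _ (by omega) hh (by omega)
      · exact (key _ _ (by omega) hh (by omega)).symm

theorem main_gt {ξ : ℝ} {d : ℚ} (hd : ξ ^ 2 = d) (h : Irrational ξ) (h1 : 1 < ξ) (s : List ℤ)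
    (hs0 : s ≠ []) (N : ℕ) (hN : 1 ≤ N)
    (hs : ∀ j : ℕ, cfTerm ξ (N + j) = s.getD (j % s.length) 0) :
    (Odd s.length ∧ Palindromic s) ∨ Bipalindromic s := by
  have hL : 1 ≤ s.length := List.length_pos_iff.2 hs0
  have hper : ∀ j, cfTerm ξ (N + j + s.length) = cfTerm ξ (N + j) := by
    intro j
    rw [add_assoc, hs, hs, Nat.add_mod_right]
  refine window_comb (cfTerm ξ) s.length N hL hN s ?_ (fun n hn => (w_per hd h h1 hper n hn).2)
    (fun k hk hkL => (cf_symm hd h h1 hL hper k hkL).1 hk)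
  apply List.ext_getElem
  · simp
  · intro i h1 h2
    simp only [List.getElem_map, List.getElem_range]
    rw [hs, Nat.mod_eq_of_lt h1, List.getD_eq_getElem _ _ h1]

/-- The continued fraction of `√(p/q)` has period either odd and palindromic, or
bipalindromic. -/
theorem statement10 (p q : ℕ) (hp : 0 < p) (hq : 0 < q)
    (hns : ¬ ∃ r : ℚ, (p : ℚ) / (q : ℚ) = r ^ 2) :
    ∀ s : List ℤ, IsCFPeriod s (Real.sqrt ((p : ℝ) / (q : ℝ))) →
      (Odd s.length ∧ Palindromic s) ∨ Bipalindromic s := by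
  rintro s ⟨hs0, ⟨N, hN⟩, -⟩
  have hp' : (0:ℝ) < p := by exact_mod_cast hp
  have hq' : (0:ℝ) < q := by exact_mod_cast hq
  have hpos : (0:ℝ) < (p:ℝ) / q := by positivity
  set ξ := Real.sqrt ((p : ℝ) / (q : ℝ)) with hξ
  have hξ0 : 0 < ξ := Real.sqrt_pos.2 hpos
  have hsq : ξ ^ 2 = ((p / q : ℚ) : ℝ) := by
    rw [hξ, Real.sq_sqrt hpos.le]; push_cast; rfl
  have hirr : Irrational ξ := by
    rintro ⟨r, hr⟩
    apply hns
    refine ⟨r, ?_⟩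
    rw [← hr] at hsq
    exact_mod_cast hsq.symm
  have hL : 1 ≤ s.length := List.length_pos_iff.2 hs0
  have hN2 : ∀ j, cfTerm ξ (N + 2 * s.length + j) = s.getD (j % s.length) 0 := by
    intro j
    rw [add_assoc, hN, add_comm, Nat.add_mul_mod_self_right]
  rcases lt_trichotomy ξ 1 with hlt | heq | hgt
  · have hfl : ⌊ξ⌋ = 0 := Int.floor_eq_zero_iff.2 ⟨hξ0.le, hlt⟩
    have hg : gaussIter ξ 1 = 1 / ξ := by simp [gaussIter, hfl]
    refine main_gt (ξ := gaussIter ξ 1) (d := (p / q : ℚ)⁻¹) ?_ (gi_irr hirr 1) (gi_gt hirr 0) s hs0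
      (N + 2 * s.length - 1) (by omega) ?_
    · rw [hg, div_pow, hsq]; push_cast; simp
    · intro j
      rw [cf_shift, ← hN2]
      congr 1; omega
  · exact absurd heq hirr.ne_one
  · exact main_gt hsq hirr hgt s hs0 (N + 2 * s.length) (by omega) hN2
end

section
/- Let f=(m,n,k) be an integer binary quadratic form with discriminant Δ=k²−4mn>0 not a perfect square, let Γ(f)=[a_1,…,a_P] be the period of the continued fraction of ξ⁺(f), let Π(f)=[a_1,…,a_p] be Γ(f) if P is even and Γ(f) repeated twice (p=2P) if P is odd, and set t=a_1+⋯+a_p. Then the number of integer triples (m',n',k') that are SL(2,ℤ)-equivalent to f and satisfy m'>0 and n'<0 is exactly t, and likewise the number of triples equivalent to f with m'<0 and n'>0 is exactly t. -/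
/-- The value of the binary quadratic form `f = (m, n, k)`, i.e. `m*x^2 + n*y^2 + k*x*y`. -/
def qval (f : ℤ × ℤ × ℤ) (x y : ℤ) : ℤ := f.1 * x ^ 2 + f.2.1 * y ^ 2 + f.2.2 * x * y

/-- The discriminant `k^2 - 4*m*n` of the form `f = (m, n, k)`. -/
def formDisc (f : ℤ × ℤ × ℤ) : ℤ := f.2.2 ^ 2 - 4 * f.1 * f.2.1

/-- `SL(2,ℤ)`-equivalence of binary quadratic forms. -/
def SLEquiv (f g : ℤ × ℤ × ℤ) : Prop :=
  ∃ a b c d : ℤ, a * d - b * c = 1 ∧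
    ∀ x y : ℤ, qval g x y = qval f (a * x + b * y) (c * x + d * y)

/-- The root with the plus sign of `m*ξ^2 + k*ξ + n = 0`, for `f = (m, n, k)`. -/
noncomputable def xiPlus (f : ℤ × ℤ × ℤ) : ℝ :=
  (-(f.2.2 : ℝ) + Real.sqrt ((formDisc f : ℤ) : ℝ)) / (2 * (f.1 : ℝ))

/-- The root with the minus sign of `m*ξ^2 + k*ξ + n = 0`, for `f = (m, n, k)`. -/
noncomputable def xiMinus (f : ℤ × ℤ × ℤ) : ℝ :=
  (-(f.2.2 : ℝ) - Real.sqrt ((formDisc f : ℤ) : ℝ)) / (2 * (f.1 : ℝ))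

/-- The conjugate `(m, n, -k)` of the form `(m, n, k)`. -/
def conjF (f : ℤ × ℤ × ℤ) : ℤ × ℤ × ℤ := (f.1, f.2.1, -f.2.2)

/-- The adjoint `(-n, -m, k)` of the form `(m, n, k)`. -/
def adjF (f : ℤ × ℤ × ℤ) : ℤ × ℤ × ℤ := (-f.2.1, -f.1, f.2.2)

/-- The antipodal `(-n, -m, -k)` of the form `(m, n, k)`. -/
def antipF (f : ℤ × ℤ × ℤ) : ℤ × ℤ × ℤ := (-f.2.1, -f.1, -f.2.2)

/-- A form `(m, n, k)` is primitive if `gcd(m, n, k) = 1`. -/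
def IsPrimitiveForm (f : ℤ × ℤ × ℤ) : Prop := Int.gcd f.1 (Int.gcd f.2.1 f.2.2) = 1


def S11.stp (g : ℤ × ℤ × ℤ) : ℤ × ℤ × ℤ :=
  if g.1 + g.2.1 + g.2.2 < 0 then (g.1, g.1 + g.2.1 + g.2.2, g.2.2 + 2 * g.1)
  else (g.1 + g.2.1 + g.2.2, g.2.1, g.2.2 + 2 * g.2.1)

def S11.InH (D : ℤ) (g : ℤ × ℤ × ℤ) : Prop := 0 < g.1 ∧ g.2.1 < 0 ∧ formDisc g = D

def S11.Red (g : ℤ × ℤ × ℤ) : Prop := g.1 + g.2.1 + g.2.2 < 0 ∧ 0 < g.1 + g.2.1 - g.2.2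

noncomputable def S11.rt (r : ℝ) (g : ℤ × ℤ × ℤ) : ℝ := (-(g.2.2 : ℝ) + r) / (2 * (g.1 : ℝ))

namespace S11

/-! ### equivalence -/

lemma sl_refl (f : ℤ × ℤ × ℤ) : SLEquiv f f := ⟨1, 0, 0, 1, by norm_num, fun x y => by simp⟩

lemma sl_trans {f g h : ℤ × ℤ × ℤ} (h1 : SLEquiv f g) (h2 : SLEquiv g h) : SLEquiv f h := by
  obtain ⟨a, b, c, d, hd, H⟩ := h1
  obtain ⟨a', b', c', d', hd', H'⟩ := h2
  refine ⟨a * a' + b * c', a * b' + b * d', c * a' + d * c', c * b' + d * d', ?_, ?_⟩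
  · linear_combination (a' * d' - b' * c') * hd + hd'
  · intro x y
    rw [H', H]
    congr 1 <;> ring

lemma sl_symm {f g : ℤ × ℤ × ℤ} (h1 : SLEquiv f g) : SLEquiv g f := by
  obtain ⟨a, b, c, d, hd, H⟩ := h1
  refine ⟨d, -b, -c, a, by linarith, ?_⟩
  intro x y
  rw [H]
  congr 1
  · linear_combination (-x) * hd
  · linear_combination (-y) * hd

/-- coefficients of the transformed form -/
def act (f : ℤ × ℤ × ℤ) (a b c d : ℤ) : ℤ × ℤ × ℤ :=
  (qval f a c, qval f b d, 2 * f.1 * a * b + 2 * f.2.1 * c * d + f.2.2 * (a * d + b * c))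

lemma form_ext {f g : ℤ × ℤ × ℤ} (h : ∀ x y, qval f x y = qval g x y) : f = g := by
  obtain ⟨m, n, k⟩ := f
  obtain ⟨m', n', k'⟩ := g
  have h1 := h 1 0
  have h2 := h 0 1
  have h3 := h 1 1
  simp only [qval] at h1 h2 h3
  simp only [Prod.mk.injEq]
  refine ⟨?_, ?_, ?_⟩ <;> linarith

lemma qval_act (f : ℤ × ℤ × ℤ) (a b c d x y : ℤ) :
    qval (act f a b c d) x y = qval f (a * x + b * y) (c * x + d * y) := by
  simp only [qval, act]; ring

lemma sl_act (f : ℤ × ℤ × ℤ) {a b c d : ℤ} (h : a * d - b * c = 1) :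
    SLEquiv f (act f a b c d) := ⟨a, b, c, d, h, qval_act f a b c d⟩

lemma sl_iff {f g : ℤ × ℤ × ℤ} : SLEquiv f g ↔ ∃ a b c d : ℤ, a * d - b * c = 1 ∧ g = act f a b c d := by
  constructor
  · rintro ⟨a, b, c, d, h, H⟩
    exact ⟨a, b, c, d, h, form_ext fun x y => by rw [H, qval_act]⟩
  · rintro ⟨a, b, c, d, h, rfl⟩
    exact sl_act f h

lemma disc_act (f : ℤ × ℤ × ℤ) {a b c d : ℤ} (h : a * d - b * c = 1) :
    formDisc (act f a b c d) = formDisc f := by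
  simp only [formDisc, act, qval]
  linear_combination (a * d - b * c + 1) * (f.2.2 ^ 2 - 4 * f.1 * f.2.1) * h

lemma sl_disc {f g : ℤ × ℤ × ℤ} (h : SLEquiv f g) : formDisc g = formDisc f := by
  obtain ⟨a, b, c, d, h', rfl⟩ := sl_iff.1 h
  exact disc_act f h'

lemma act_R (g : ℤ × ℤ × ℤ) (a : ℤ) :
    act g 1 a 0 1 = (g.1, g.1 * a ^ 2 + g.2.1 + g.2.2 * a, g.2.2 + 2 * g.1 * a) := by
  simp only [act, qval, Prod.mk.injEq]; refine ⟨?_, ?_, ?_⟩ <;> ring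

lemma act_L (g : ℤ × ℤ × ℤ) (b : ℤ) :
    act g 1 0 b 1 = (g.1 + g.2.1 * b ^ 2 + g.2.2 * b, g.2.1, g.2.2 + 2 * g.2.1 * b) := by
  simp only [act, qval, Prod.mk.injEq]; refine ⟨?_, ?_, ?_⟩ <;> ring

lemma stp_neg {g : ℤ × ℤ × ℤ} (h : g.1 + g.2.1 + g.2.2 < 0) : stp g = act g 1 1 0 1 := by
  rw [act_R, stp, if_pos h]; simp

lemma stp_pos {g : ℤ × ℤ × ℤ} (h : ¬ g.1 + g.2.1 + g.2.2 < 0) : stp g = act g 1 0 1 1 := by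
  rw [act_L, stp, if_neg h]; simp

lemma sl_stp (g : ℤ × ℤ × ℤ) : SLEquiv g (stp g) := by
  by_cases h : g.1 + g.2.1 + g.2.2 < 0
  · rw [stp_neg h]; exact sl_act g (by norm_num)
  · rw [stp_pos h]; exact sl_act g (by norm_num)

lemma sl_iter (g : ℤ × ℤ × ℤ) (j : ℕ) : SLEquiv g (stp^[j] g) := by
  induction j with
  | zero => exact sl_refl g
  | succ j ih => rw [Function.iterate_succ_apply']; exact sl_trans ih (sl_stp _)

lemma sigma_ne {D : ℤ} (hsq : ¬ IsSquare D) {g : ℤ × ℤ × ℤ} (hg : formDisc g = D) :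
    g.1 + g.2.1 + g.2.2 ≠ 0 := by
  intro h
  apply hsq
  refine ⟨g.1 - g.2.1, ?_⟩
  rw [← hg, formDisc]
  have : g.2.2 = -g.1 - g.2.1 := by linarith
  rw [this]; ring

lemma fst_ne {D : ℤ} (hsq : ¬ IsSquare D) {g : ℤ × ℤ × ℤ} (hg : formDisc g = D) :
    g.1 ≠ 0 := by
  intro h
  apply hsq
  refine ⟨g.2.2, ?_⟩
  rw [← hg, formDisc, h]; ring

lemma inH_stp {D : ℤ} (hsq : ¬ IsSquare D) {g : ℤ × ℤ × ℤ} (hg : InH D g) : InH D (stp g) := by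
  obtain ⟨h1, h2, h3⟩ := hg
  have h4 := sigma_ne hsq h3
  refine ⟨?_, ?_, by rw [sl_disc (sl_stp g), h3]⟩
  · unfold stp; split_ifs <;> simp only <;> omega
  · unfold stp; split_ifs <;> simp only <;> omega

lemma inH_iter {D : ℤ} (hsq : ¬ IsSquare D) {g : ℤ × ℤ × ℤ} (hg : InH D g) (j : ℕ) :
    InH D (stp^[j] g) := by
  induction j with
  | zero => exact hg
  | succ j ih => rw [Function.iterate_succ_apply']; exact inH_stp hsq ih

lemma stp_inj {D : ℤ} {g h : ℤ × ℤ × ℤ} (hg : InH D g) (hh : InH D h)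
    (e : stp g = stp h) : g = h := by
  obtain ⟨m, n, k⟩ := g
  obtain ⟨m', n', k'⟩ := h
  obtain ⟨h1, h2, -⟩ := hg
  obtain ⟨h1', h2', -⟩ := hh
  simp only [stp] at *
  simp only [Prod.mk.injEq]
  split_ifs at e <;> simp only [Prod.mk.injEq] at e <;> omega

lemma iter_inj {D : ℤ} (hsq : ¬ IsSquare D) (j : ℕ) {g h : ℤ × ℤ × ℤ} (hg : InH D g)
    (hh : InH D h) (e : stp^[j] g = stp^[j] h) : g = h := by
  induction j with
  | zero => exact e
  | succ j ih =>
    rw [Function.iterate_succ_apply', Function.iterate_succ_apply'] at e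
    exact ih (stp_inj (inH_iter hsq hg j) (inH_iter hsq hh j) e)

/-! ### transitivity -/

lemma qval_nonneg_of {g : ℤ × ℤ × ℤ} (h2 : g.2.1 < 0) (hm : 0 < g.1)
    (hs : 0 ≤ g.1 + g.2.1 + g.2.2) {x y : ℤ} (hy : 0 ≤ y) (hxy : y ≤ x) : 0 ≤ qval g x y := by
  obtain ⟨m, n, k⟩ := g
  simp only [qval] at *
  have e1 : 0 ≤ (-n) * (y * (x - y)) := by apply mul_nonneg; omega; apply mul_nonneg <;> omega
  have e2 : 0 ≤ x * (y * (m + n + k)) := by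
    apply mul_nonneg; omega; apply mul_nonneg <;> omega
  have e3 : 0 ≤ x * (m * (x - y)) := by
    apply mul_nonneg; omega; apply mul_nonneg <;> omega
  nlinarith

lemma qval_nonpos_of {g : ℤ × ℤ × ℤ} (h2 : g.2.1 < 0) (hm : 0 < g.1)
    (hs : g.1 + g.2.1 + g.2.2 ≤ 0) {x y : ℤ} (hy : 0 ≤ x) (hxy : x ≤ y) : qval g x y ≤ 0 := by
  obtain ⟨m, n, k⟩ := g
  simp only [qval] at *
  have e1 : 0 ≤ m * (x * (y - x)) := by apply mul_nonneg; omega; apply mul_nonneg <;> omega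
  have e2 : 0 ≤ x * (y * (-(m + n + k))) := by
    apply mul_nonneg; omega; apply mul_nonneg <;> omega
  have e3 : 0 ≤ y * ((-n) * (y - x)) := by
    apply mul_nonneg; omega; apply mul_nonneg <;> omega
  nlinarith

lemma act_act_R (f : ℤ × ℤ × ℤ) (a b c d : ℤ) :
    act f a b c d = act (act f 1 1 0 1) (a - c) (b - d) c d := by
  simp only [act, qval, Prod.mk.injEq]; refine ⟨?_, ?_, ?_⟩ <;> ring

lemma act_act_L (f : ℤ × ℤ × ℤ) (a b c d : ℤ) :
    act f a b c d = act (act f 1 0 1 1) a b (c - a) (d - b) := by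
  simp only [act, qval, Prod.mk.injEq]; refine ⟨?_, ?_, ?_⟩ <;> ring

lemma act_neg (f : ℤ × ℤ × ℤ) (a b c d : ℤ) :
    act f a b c d = act f (-a) (-b) (-c) (-d) := by
  simp only [act, qval, Prod.mk.injEq]; refine ⟨?_, ?_, ?_⟩ <;> ring

lemma reach {D : ℤ} (hsq : ¬ IsSquare D) (N : ℕ) : ∀ (f : ℤ × ℤ × ℤ) (a b c d : ℤ),
    InH D f → 0 ≤ a → 0 ≤ b → 0 ≤ c → 0 ≤ d → a * d - b * c = 1 → a + b + c + d ≤ N →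
    0 < (act f a b c d).1 → (act f a b c d).2.1 < 0 → ∃ j : ℕ, act f a b c d = stp^[j] f := by
  induction N with
  | zero =>
    intro f a b c d hf ha hb hc hd hdet hN
    have : a = 0 := by push_cast at hN; omega
    have : b = 0 := by push_cast at hN; omega
    subst a; subst b; simp at hdet
  | succ N ih =>
    intro f a b c d hf ha hb hc hd hdet hN hp hn
    obtain ⟨hm, hn', hD⟩ := id hf
    have ha' : 0 < a := by
      rcases ha.lt_or_eq with h | h
      · exact h
      · subst h; nlinarith [mul_nonneg hb hc]
    have hd' : 0 < d := by
      rcases hd.lt_or_eq with h | h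
      · exact h
      · subst h; nlinarith [mul_nonneg hb hc]
    by_cases hI : b = 0 ∧ c = 0
    · obtain ⟨rfl, rfl⟩ := hI
      have h1 : a = 1 := by nlinarith
      have h2 : d = 1 := by nlinarith
      subst h1; subst h2
      refine ⟨0, ?_⟩
      simp [act, qval]
    have key : (c ≤ a ∧ d ≤ b) ∨ (a ≤ c ∧ b ≤ d) := by
      by_contra hcon
      rw [not_or, not_and_or, not_and_or] at hcon
      obtain ⟨h1, h2⟩ := hcon
      rcases h1 with h1 | h1
      · rcases h2 with h2 | h2
        · omega
        · nlinarith
      · rcases h2 with h2 | h2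
        · -- d > b, a > c
          apply hI
          have : (a - c - 1) * d + c * (d - b - 1) + c + d = 1 := by linarith
          have e1 : 0 ≤ (a - c - 1) * d := by apply mul_nonneg <;> omega
          have e2 : 0 ≤ c * (d - b - 1) := by apply mul_nonneg <;> omega
          omega
        · omega
    rcases key with ⟨k1, k2⟩ | ⟨k1, k2⟩
    · have hs : f.1 + f.2.1 + f.2.2 < 0 := by
        by_contra hcon
        have := qval_nonneg_of hn' hm (not_lt.1 hcon) hd k2
        simp only [act] at hn
        omega
      rw [act_act_R, ← stp_neg hs] at hp hn ⊢
      obtain ⟨j, hj⟩ := ih (stp f) (a - c) (b - d) c d (inH_stp hsq hf) (by omega) (by omega) hc hd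
        (by linarith) (by push_cast at hN; omega) hp hn
      exact ⟨j + 1, by rw [hj, Function.iterate_succ_apply]⟩
    · have hs : ¬ f.1 + f.2.1 + f.2.2 < 0 := by
        intro hcon
        have := qval_nonpos_of hn' hm hcon.le ha k1
        simp only [act] at hp
        omega
      rw [act_act_L, ← stp_pos hs] at hp hn ⊢
      obtain ⟨j, hj⟩ := ih (stp f) a b (c - a) (d - b) (inH_stp hsq hf) ha hb (by omega) (by omega)
        (by linarith) (by push_cast at hN; omega) hp hn
      exact ⟨j + 1, by rw [hj, Function.iterate_succ_apply]⟩

lemma reach' {D : ℤ} (hsq : ¬ IsSquare D) {f g : ℤ × ℤ × ℤ} {a b c d : ℤ} (hf : InH D f)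
    (hg : InH D g) (e : g = act f a b c d) (ha : 0 ≤ a) (hb : 0 ≤ b) (hc : 0 ≤ c) (hd : 0 ≤ d)
    (hdet : a * d - b * c = 1) : ∃ j : ℕ, g = stp^[j] f := by
  subst e
  exact reach hsq (a + b + c + d).toNat f a b c d hf ha hb hc hd hdet (by omega) hg.1 hg.2.1

/-- sign contradiction -/
lemma no_cross {f : ℤ × ℤ × ℤ} (hm : 0 < f.1) (hn : f.2.1 < 0) {a b c d : ℤ} (ha : 0 ≤ a)
    (hb : 0 ≤ b) (hc : 0 ≤ c) (hd : 0 ≤ d) (hdet : b * c - a * d = 1) (h1 : 0 < qval f a c)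
    (h2 : qval f b d < 0) : False := by
  obtain ⟨m, n, k⟩ := f
  simp only [qval] at *
  have hb' : 0 < b := by
    rcases hb.lt_or_eq with h | h
    · exact h
    · subst h; nlinarith [mul_nonneg ha hd]
  have hc' : 0 < c := by
    rcases hc.lt_or_eq with h | h
    · exact h
    · subst h; nlinarith [mul_nonneg ha hd]
  -- c * d-type combination
  have e : b * d * (m * a ^ 2 + n * c ^ 2 + k * a * c) - a * c * (m * b ^ 2 + n * d ^ 2 + k * b * d)
      = (a * b * m - c * d * n) * (a * d - b * c) := by ring
  have e1 : 0 ≤ b * d * (m * a ^ 2 + n * c ^ 2 + k * a * c) := by positivity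
  have e2 : 0 ≤ a * c * (-(m * b ^ 2 + n * d ^ 2 + k * b * d)) := by
    apply mul_nonneg (by positivity); omega
  have e3 : 0 ≤ a * b * m := by positivity
  have e4 : 0 ≤ c * d * (-n) := mul_nonneg (by positivity) (by omega)
  have e5 : (a * b * m - c * d * n) = 0 := by nlinarith
  have e6 : a * b * m = 0 := by linarith
  have e7 : c * d * (-n) = 0 := by linarith
  have a0 : a = 0 := by
    rcases mul_eq_zero.1 e6 with h | h
    · rcases mul_eq_zero.1 h with h | h
      · exact h
      · omega
    · omega
  subst a0
  nlinarith [mul_pos hc' hc']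

lemma trans_orbit {D : ℤ} (hsq : ¬ IsSquare D) {f g : ℤ × ℤ × ℤ} (hf : InH D f)
    (hg : InH D g) (h : SLEquiv f g) : (∃ j : ℕ, g = stp^[j] f) ∨ (∃ j : ℕ, f = stp^[j] g) := by
  obtain ⟨a, b, c, d, hdet, e⟩ := sl_iff.1 h
  have e' : f = act g d (-b) (-c) a := by
    subst e
    apply form_ext
    intro x y
    rw [qval_act, qval_act]
    congr 1
    · linear_combination (-x) * hdet
    · linear_combination (-y) * hdet
  have en := act_neg f a b c d
  have en' := act_neg g d (-b) (-c) a
  have h1 : 0 < qval f a c := by have := hg.1; rw [e] at this; exact this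
  have h2 : qval f b d < 0 := by have := hg.2.1; rw [e] at this; exact this
  have h1' : 0 < qval f (-a) (-c) := by rw [en] at e; have := hg.1; rw [e] at this; exact this
  have h2' : qval f (-b) (-d) < 0 := by rw [en] at e; have := hg.2.1; rw [e] at this; exact this
  have cj : ∀ x y, qval (f.1, f.2.1, -f.2.2) (-x) y = qval f x y := by
    intro x y; simp only [qval]; ring
  have cj' : ∀ x y, qval (f.1, f.2.1, -f.2.2) x y = qval f (-x) y := by
    intro x y; simp only [qval]; ring
  rcases lt_trichotomy a 0 with ha | ha | ha <;> rcases lt_trichotomy b 0 with hb | hb | hb <;>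
    rcases lt_trichotomy c 0 with hc | hc | hc <;> rcases lt_trichotomy d 0 with hd | hd | hd
  all_goals first
    | exact Or.inl (reach' hsq hf hg e (by omega) (by omega) (by omega) (by omega) hdet)
    | exact Or.inl (reach' hsq hf hg (e.trans en) (by omega) (by omega) (by omega) (by omega) (by linarith))
    | exact Or.inr (reach' hsq hg hf e' (by omega) (by omega) (by omega) (by omega) (by linarith))
    | exact Or.inr (reach' hsq hg hf (e'.trans en') (by omega) (by omega) (by omega) (by omega) (by linarith))
    | exact (no_cross (f := f) (a := a) (b := -b) (c := c) (d := -d) hf.1 hf.2.1 (by omega) (by omega) (by omega) (by omega) (by linarith) h1 h2').elim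
    | exact (no_cross (f := f) (a := -a) (b := b) (c := -c) (d := d) hf.1 hf.2.1 (by omega) (by omega) (by omega) (by omega) (by linarith) h1' h2).elim
    | exact (no_cross (f := (f.1, f.2.1, -f.2.2)) (a := -a) (b := -b) (c := c) (d := d) hf.1 hf.2.1 (by omega) (by omega) (by omega) (by omega) (by linarith) (by rw [cj]; exact h1) (by rw [cj]; exact h2)).elim
    | exact (no_cross (f := (f.1, f.2.1, -f.2.2)) (a := a) (b := b) (c := -c) (d := -d) hf.1 hf.2.1 (by omega) (by omega) (by omega) (by omega) (by linarith) (by rw [cj']; exact h1') (by rw [cj']; exact h2')).elim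
    | (exfalso; subst_vars; nlinarith)

end S11
namespace S11

/-! ### continued fractions -/

lemma gi_irr {x : ℝ} (hx : Irrational x) (n : ℕ) : Irrational (gaussIter x n) := by
  induction n with
  | zero => exact hx
  | succ n ih =>
    rw [gaussIter, one_div]
    exact (ih.sub_intCast _).inv

lemma gi_fract {x : ℝ} (hx : Irrational x) (n : ℕ) :
    0 < gaussIter x n - cfTerm x n ∧ gaussIter x n - cfTerm x n < 1 := by
  have h1 := Int.floor_le (gaussIter x n)
  have h2 := Int.lt_floor_add_one (gaussIter x n)
  have h3 := (gi_irr hx n).ne_int ⌊gaussIter x n⌋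
  unfold cfTerm
  refine ⟨?_, by linarith⟩
  exact sub_pos.2 (lt_of_le_of_ne h1 (Ne.symm h3))

lemma gi_succ (x : ℝ) (n : ℕ) : gaussIter x (n + 1) = 1 / (gaussIter x n - cfTerm x n) := rfl

lemma gi_gt_one {x : ℝ} (hx : Irrational x) (n : ℕ) : 1 < gaussIter x (n + 1) := by
  obtain ⟨h1, h2⟩ := gi_fract hx n
  rw [gi_succ]
  exact (one_lt_div h1).2 h2

lemma cf_pos {x : ℝ} (hx : Irrational x) (n : ℕ) : 1 ≤ cfTerm x (n + 1) := by
  unfold cfTerm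
  rw [Int.le_floor]
  exact_mod_cast (gi_gt_one hx n).le

lemma gi_add (x : ℝ) (M j : ℕ) : gaussIter (gaussIter x M) j = gaussIter x (M + j) := by
  induction j with
  | zero => rfl
  | succ j ih => rw [← add_assoc, gi_succ, gi_succ, cfTerm, cfTerm, ih]

lemma cf_add (x : ℝ) (M j : ℕ) : cfTerm (gaussIter x M) j = cfTerm x (M + j) := by
  rw [cfTerm, gi_add, cfTerm]

lemma gi_unfold (x : ℝ) (n : ℕ) :
    gaussIter x n = cfTerm x n + 1 / gaussIter x (n + 1) := by
  rw [gi_succ, one_div_one_div]; ring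

lemma cf_contract {x y : ℝ} (hx : Irrational x) (hy : Irrational y) (n : ℕ)
    (h0 : cfTerm x n = cfTerm y n) (h1 : cfTerm x (n + 1) = cfTerm y (n + 1)) :
    2 * |gaussIter x n - gaussIter y n| ≤ |gaussIter x (n + 2) - gaussIter y (n + 2)| := by
  have ex := gi_unfold x n
  have ex' := gi_unfold x (n + 1)
  have ey := gi_unfold y n
  have ey' := gi_unfold y (n + 1)
  rw [ex'] at ex
  rw [ey'] at ey
  have gx := gi_gt_one hx (n + 1)
  have gy := gi_gt_one hy (n + 1)
  have hb := cf_pos hx n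
  rw [ex, ey, ← h0, ← h1]
  have hb' : (1 : ℝ) ≤ cfTerm x (n + 1) := by exact_mod_cast hb
  generalize (cfTerm x (n + 1) : ℝ) = b at *
  generalize (cfTerm x n : ℝ) = a at *
  simp only [add_assoc, Nat.reduceAdd] at *
  generalize gaussIter x (n + 2) = u at *
  generalize gaussIter y (n + 2) = v at *
  have hu : 2 ≤ b * u + 1 := by nlinarith
  have hv : 2 ≤ b * v + 1 := by nlinarith
  have e : a + 1 / (b + 1 / u) - (a + 1 / (b + 1 / v)) = (u - v) / ((b * u + 1) * (b * v + 1)) := by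
    have : b + 1 / u = (b * u + 1) / u := by field_simp
    have : b + 1 / v = (b * v + 1) / v := by field_simp
    have : b * u + 1 ≠ 0 := by positivity
    have : b * v + 1 ≠ 0 := by positivity
    simp only [*]
    field_simp
    ring
  rw [e, abs_div, abs_of_pos (a := (b * u + 1) * (b * v + 1)) (by positivity), ← mul_div_assoc,
    div_le_iff₀ (by positivity)]
  have := abs_nonneg (u - v)
  nlinarith [mul_le_mul hu hv (by norm_num) (by linarith)]

lemma cf_unique {x y : ℝ} (hx : Irrational x) (hy : Irrational y)
    (h : ∀ n, cfTerm x n = cfTerm y n) : x = y := by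
  have key : ∀ i : ℕ, 2 ^ i * |x - y| ≤ |gaussIter x (2 * i) - gaussIter y (2 * i)| := by
    intro i
    induction i with
    | zero => simp [gaussIter]
    | succ i ih =>
      have := cf_contract hx hy (2 * i) (h _) (h _)
      rw [show 2 * (i + 1) = 2 * i + 2 by ring, pow_succ]
      nlinarith
  by_contra hne
  have hp : 0 < |x - y| := abs_pos.2 (sub_ne_zero.2 hne)
  obtain ⟨i, hi⟩ := pow_unbounded_of_one_lt (1 / |x - y|) (one_lt_two (α := ℝ))
  rw [div_lt_iff₀ hp] at hi
  have h1 := key i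
  have h2 := gi_fract hx (2 * i)
  have h3 := gi_fract hy (2 * i)
  rw [h] at h2
  have : |gaussIter x (2 * i) - gaussIter y (2 * i)| < 1 := by
    rw [abs_lt]; constructor <;> linarith
  linarith

/-- The sequence of conjugates. -/
noncomputable def cj (x y : ℝ) : ℕ → ℝ
  | 0 => y
  | n + 1 => 1 / (cj x y n - cfTerm x n)

lemma cj_step {x y : ℝ} (hx : Irrational x) (j : ℕ) (h : cj x y (j + 1) < 0) :
    -1 < cj x y (j + 2) ∧ cj x y (j + 2) < 0 := by
  have hb : (1 : ℝ) ≤ cfTerm x (j + 1) := by exact_mod_cast cf_pos hx j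
  rw [show cj x y (j + 2) = 1 / (cj x y (j + 1) - cfTerm x (j + 1)) from rfl]
  have h1 : cj x y (j + 1) - cfTerm x (j + 1) < -1 := by linarith
  constructor
  · rw [lt_div_iff_of_neg (by linarith)]; linarith
  · exact div_neg_of_pos_of_neg one_pos (by linarith)

lemma cj_red {x y : ℝ} (hx : Irrational x) (hy : Irrational y) (hne : x ≠ y) :
    ∃ J : ℕ, ∀ j, J ≤ j → -1 < cj x y j ∧ cj x y j < 0 := by
  have hex : ∃ n, cfTerm x n ≠ cfTerm y n := by
    by_contra hcon
    push Not at hcon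
    exact hne (cf_unique hx hy hcon)
  classical
  let i := Nat.find hex
  have hi : cfTerm x i ≠ cfTerm y i := Nat.find_spec hex
  have hlt : ∀ j, j < i → cfTerm x j = cfTerm y j := fun j hj => by
    have := Nat.find_min hex hj
    exact not_not.1 this
  have heq : ∀ j, j ≤ i → cj x y j = gaussIter y j := by
    intro j
    induction j with
    | zero => intro _; rfl
    | succ j ih =>
      intro hj
      rw [gi_succ, show cj x y (j + 1) = 1 / (cj x y j - cfTerm x j) from rfl, ih (by omega),
        hlt j (by omega)]
  have hneg : ∃ j, cj x y (j + 1) < 0 := by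
    obtain ⟨f1, f2⟩ := gi_fract hy i
    rcases lt_or_gt_of_ne hi with h | h
    · refine ⟨i + 1, ?_⟩
      have h' : (cfTerm x i : ℝ) + 1 ≤ cfTerm y i := by exact_mod_cast h
      have hb : (1 : ℝ) ≤ cfTerm x (i + 1) := by exact_mod_cast cf_pos hx i
      have e1 : cj x y (i + 1) < 1 := by
        rw [show cj x y (i + 1) = 1 / (cj x y i - cfTerm x i) from rfl, heq i le_rfl]
        rw [div_lt_one (by linarith)]
        linarith
      rw [show cj x y (i + 1 + 1) = 1 / (cj x y (i + 1) - cfTerm x (i + 1)) from rfl]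
      exact div_neg_of_pos_of_neg one_pos (by linarith)
    · refine ⟨i, ?_⟩
      have h' : (cfTerm y i : ℝ) + 1 ≤ cfTerm x i := by exact_mod_cast h
      rw [show cj x y (i + 1) = 1 / (cj x y i - cfTerm x i) from rfl, heq i le_rfl]
      exact div_neg_of_pos_of_neg one_pos (by linarith)
  obtain ⟨j, hj⟩ := hneg
  refine ⟨j + 2, ?_⟩
  intro l hl
  induction l, hl using Nat.le_induction with
  | base => exact cj_step hx j hj
  | succ l hl ih =>
    obtain ⟨l', rfl⟩ : ∃ l', l = l' + 1 := ⟨l - 1, by omega⟩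
    exact cj_step hx l' ih.2

/-! ### roots -/

lemma rt_irr {r : ℝ} (hr : Irrational r) {g : ℤ × ℤ × ℤ} (hg : g.1 ≠ 0) : Irrational (rt r g) := by
  unfold rt
  have h1 : Irrational (-(g.2.2 : ℝ) + r) := by
    have := hr.intCast_add (-g.2.2)
    push_cast at this
    exact this
  have := h1.div_intCast (m := 2 * g.1) (by omega)
  push_cast at this
  exact this

lemma rt_R (r : ℝ) {g : ℤ × ℤ × ℤ} (hg : g.1 ≠ 0) (a : ℤ) :
    rt r (act g 1 a 0 1) = rt r g - a := by
  rw [act_R]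
  have : (g.1 : ℝ) ≠ 0 := by exact_mod_cast hg
  unfold rt
  push_cast
  field_simp
  ring

lemma rt_L {r : ℝ} (hr : Irrational r) {g : ℤ × ℤ × ℤ} (hr2 : r ^ 2 = (formDisc g : ℤ))
    (hg : g.1 ≠ 0) (b : ℤ)
    (hg' : (act g 1 0 b 1).1 ≠ 0) :
    rt r (act g 1 0 b 1) = 1 / (1 / rt r g - b) := by
  have hi : Irrational (1 / rt r g - b) := by
    rw [one_div]; exact (rt_irr hr hg).inv.sub_intCast b
  have h0 := hi.ne_zero
  have h1 := (rt_irr hr hg).ne_zero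
  have h2 : (g.1 : ℝ) ≠ 0 := by exact_mod_cast hg
  rw [eq_div_iff h0]
  rw [act_L] at hg' ⊢
  obtain ⟨m, n, k⟩ := g
  simp only [rt, formDisc] at *
  have h3 : ((m + n * b ^ 2 + k * b : ℤ) : ℝ) ≠ 0 := by exact_mod_cast hg'
  push_cast at *
  have h4 : -(k : ℝ) + r ≠ 0 := by
    intro h; rw [h] at h1; simp at h1
  rw [one_div_div]
  field_simp
  ring_nf
  ring_nf at hr2
  simp only [hr2]
  ring

lemma rt_inj {r : ℝ} (hr : Irrational r) {g h : ℤ × ℤ × ℤ} (hg : g.1 ≠ 0) (hh : h.1 ≠ 0)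
    (hd : formDisc g = formDisc h) (e : rt r g = rt r h) : g = h := by
  obtain ⟨m, n, k⟩ := g
  obtain ⟨m', n', k'⟩ := h
  simp only [rt, formDisc] at *
  have h1 : (m : ℝ) ≠ 0 := by exact_mod_cast hg
  have h2 : (m' : ℝ) ≠ 0 := by exact_mod_cast hh
  rw [div_eq_div_iff (by positivity) (by positivity)] at e
  have hm : m = m' := by
    by_contra hne
    have h3 : Irrational (r * ((m' - m : ℤ) : ℝ)) := hr.mul_intCast (by omega)
    apply h3.ne_int (k * m' - k' * m)
    push_cast
    linarith
  subst hm
  have hk : k = k' := by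
    have : (k : ℝ) = k' := by
      have := mul_right_cancel₀ (by positivity) e
      linarith
    exact_mod_cast this
  subst hk
  have : m * n = m * n' := by linarith
  rw [mul_left_cancel₀ hg this]

/-- existence of an even-index representative -/
lemma rep {D : ℤ} (hsq : ¬ IsSquare D) {f : ℤ × ℤ × ℤ} (hf : formDisc f = D) {r : ℝ}
    (hr : Irrational r) (hr2 : r ^ 2 = (D : ℝ)) (i : ℕ) :
    ∃ g, SLEquiv f g ∧ rt r g = gaussIter (rt r f) (2 * i) ∧
      rt (-r) g = cj (rt r f) (rt (-r) f) (2 * i) := by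
  induction i with
  | zero => exact ⟨f, sl_refl f, rfl, rfl⟩
  | succ i ih =>
    obtain ⟨g, h1, h2, h3⟩ := ih
    set x := rt r f
    set y := rt (-r) f
    have e1 : SLEquiv g (act g 1 (cfTerm x (2 * i)) 0 1) := sl_act g (by ring)
    have e2 : SLEquiv (act g 1 (cfTerm x (2 * i)) 0 1)
      (act (act g 1 (cfTerm x (2 * i)) 0 1) 1 0 (cfTerm x (2 * i + 1)) 1) := sl_act _ (by ring)
    have d0 : formDisc g = D := by rw [sl_disc h1, hf]
    have d1 := (sl_disc e1).trans d0
    have d2 := (sl_disc e2).trans d1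
    refine ⟨_, sl_trans h1 (sl_trans e1 e2), ?_, ?_⟩
    · rw [rt_L hr (by rw [d1, hr2]) (fst_ne hsq d1) _ (fst_ne hsq d2), rt_R r (fst_ne hsq d0), h2]
      rfl
    · rw [rt_L hr.neg (by rw [d1, neg_sq, hr2]) (fst_ne hsq d1) _ (fst_ne hsq d2),
        rt_R _ (fst_ne hsq d0), h3]
      rfl

lemma rt_root {r : ℝ} {g : ℤ × ℤ × ℤ} (hg : g.1 ≠ 0) (hr2 : r ^ 2 = (formDisc g : ℤ)) :
    (g.2.2 : ℝ) = -(g.1 * (rt r g + rt (-r) g)) ∧ (g.2.1 : ℝ) = g.1 * (rt r g * rt (-r) g) := by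
  obtain ⟨m, n, k⟩ := g
  simp only [rt, formDisc] at *
  have h1 : (m : ℝ) ≠ 0 := by exact_mod_cast hg
  push_cast at hr2
  constructor
  · field_simp; ring
  · field_simp; ring_nf; rw [hr2]; ring

lemma red_of {D : ℤ} (hsq : ¬ IsSquare D) {g : ℤ × ℤ × ℤ} (hg : formDisc g = D) {r : ℝ}
    (hr0 : 0 < r) (hr2 : r ^ 2 = (D : ℝ)) (h1 : 1 < rt r g) (h2 : -1 < rt (-r) g)
    (h3 : rt (-r) g < 0) : InH D g ∧ Red g := by
  have hm := fst_ne hsq hg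
  obtain ⟨e1, e2⟩ := rt_root hm (by rw [hg, hr2])
  have hd : 0 < rt r g - rt (-r) g := by linarith
  have e3 : rt r g - rt (-r) g = r / g.1 := by
    have : (g.1 : ℝ) ≠ 0 := by exact_mod_cast hm
    unfold rt; field_simp; ring
  rw [e3] at hd
  have hm' : (0 : ℝ) < g.1 := (div_pos_iff_of_pos_left hr0).1 hd
  have a1 : (g.2.1 : ℝ) < 0 := by
    rw [e2]; exact mul_neg_of_pos_of_neg hm' (mul_neg_of_pos_of_neg (by linarith) h3)
  have a2 : (g.1 : ℝ) + g.2.1 + g.2.2 < 0 := by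
    have : (g.1 : ℝ) + g.2.1 + g.2.2 = g.1 * ((1 - rt r g) * (1 - rt (-r) g)) := by
      rw [e1, e2]; ring
    rw [this]
    exact mul_neg_of_pos_of_neg hm' (mul_neg_of_neg_of_pos (by linarith) (by linarith))
  have a3 : 0 < (g.1 : ℝ) + g.2.1 - g.2.2 := by
    have : (g.1 : ℝ) + g.2.1 - g.2.2 = g.1 * ((1 + rt r g) * (1 + rt (-r) g)) := by
      rw [e1, e2]; ring
    rw [this]
    exact mul_pos hm' (mul_pos (by linarith) (by linarith))
  exact ⟨⟨by exact_mod_cast hm', by exact_mod_cast a1, hg⟩, by exact_mod_cast a2, by exact_mod_cast a3⟩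

lemma rt_pos {D : ℤ} {g : ℤ × ℤ × ℤ} (hg : InH D g) {r : ℝ}
    (hr0 : 0 < r) (hr2 : r ^ 2 = (D : ℝ)) :
    0 < rt r g ∧ rt (-r) g < 0 := by
  obtain ⟨h1, h2, h3⟩ := hg
  have hm' : (0 : ℝ) < g.1 := by exact_mod_cast h1
  have hn' : (g.2.1 : ℝ) < 0 := by exact_mod_cast h2
  obtain ⟨e1, e2⟩ := rt_root h1.ne' (by rw [h3, hr2])
  have e3 : rt r g - rt (-r) g = r / g.1 := by
    unfold rt; field_simp; ring
  have e4 : 0 < rt r g - rt (-r) g := by rw [e3]; positivity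
  have e5 : rt r g * rt (-r) g < 0 := by
    by_contra hcon
    have := mul_nonneg hm'.le (not_lt.1 hcon)
    linarith
  constructor
  · by_contra hcon
    have := mul_nonneg_of_nonpos_of_nonpos (not_lt.1 hcon) (show rt (-r) g ≤ 0 by linarith)
    linarith
  · by_contra hcon
    have := mul_nonneg (show 0 ≤ rt r g by linarith) (not_lt.1 hcon)
    linarith

lemma sig_iff {D : ℤ} {g : ℤ × ℤ × ℤ} (hg : InH D g) {r : ℝ}
    (hr0 : 0 < r) (hr2 : r ^ 2 = (D : ℝ)) : g.1 + g.2.1 + g.2.2 < 0 ↔ 1 < rt r g := by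
  obtain ⟨p1, p2⟩ := rt_pos hg hr0 hr2
  obtain ⟨h1, h2, h3⟩ := hg
  have hm' : (0 : ℝ) < g.1 := by exact_mod_cast h1
  obtain ⟨e1, e2⟩ := rt_root h1.ne' (by rw [h3, hr2])
  have e : (g.1 : ℝ) + g.2.1 + g.2.2 = (g.1 * (1 - rt (-r) g)) * (1 - rt r g) := by
    rw [e1, e2]; ring
  have hp : 0 < g.1 * (1 - rt (-r) g) := mul_pos hm' (by linarith)
  have : g.1 + g.2.1 + g.2.2 < 0 ↔ (g.1 : ℝ) + g.2.1 + g.2.2 < 0 := by norm_cast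
  rw [this, e]
  constructor
  · intro h
    by_contra hcon
    have := mul_nonneg hp.le (show 0 ≤ 1 - rt r g by linarith)
    linarith
  · intro h
    exact mul_neg_of_pos_of_neg hp (by linarith)

lemma runR {D : ℤ} (hsq : ¬ IsSquare D) {g : ℤ × ℤ × ℤ} (hg : InH D g) {r : ℝ}
    (hr0 : 0 < r) (hr2 : r ^ 2 = (D : ℝ)) (j : ℕ) (hj : (j : ℝ) < rt r g) :
    rt r (stp^[j] g) = rt r g - j := by
  induction j with
  | zero => simp
  | succ j ih =>
    push_cast at hj
    have ih := ih (by linarith)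
    have hH := inH_iter hsq hg j
    rw [Function.iterate_succ_apply', stp_neg ((sig_iff hH hr0 hr2).2 (by linarith)),
      rt_R r hH.1.ne', ih]
    push_cast; ring

lemma runL {D : ℤ} (hsq : ¬ IsSquare D) {g : ℤ × ℤ × ℤ} (hg : InH D g) {r : ℝ}
    (hr : Irrational r)
    (hr0 : 0 < r) (hr2 : r ^ 2 = (D : ℝ)) (j : ℕ) (hj : (j : ℝ) < 1 / rt r g) :
    rt r (stp^[j] g) = 1 / (1 / rt r g - j) := by
  induction j with
  | zero => simp
  | succ j ih =>
    push_cast at hj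
    have ih := ih (by linarith)
    have hH := inH_iter hsq hg j
    have hs : ¬ (stp^[j] g).1 + (stp^[j] g).2.1 + (stp^[j] g).2.2 < 0 := by
      rw [sig_iff hH hr0 hr2, ih, not_lt, div_le_one (by linarith)]
      linarith
    have hH' := inH_stp hsq hH
    rw [Function.iterate_succ_apply']
    rw [stp_pos hs] at hH' ⊢
    rw [rt_L hr (by rw [hH.2.2, hr2]) hH.1.ne' 1 hH'.1.ne', ih, one_div_one_div]
    push_cast; ring

/-- one double Gauss step -/
lemma dbl {D : ℤ} (hsq : ¬ IsSquare D) {g : ℤ × ℤ × ℤ} (hg : InH D g) {r : ℝ}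
    (hr : Irrational r) (hr0 : 0 < r) (hr2 : r ^ 2 = (D : ℝ)) {a b : ℕ}
    (ha : (a : ℤ) = cfTerm (rt r g) 0) (hb : (b : ℤ) = cfTerm (rt r g) 1) :
    rt r (stp^[a + b] g) = gaussIter (rt r g) 2 ∧
      ∀ l, 0 < l → l < a + b → ¬ Red (stp^[l] g) := by
  have hx := rt_irr hr hg.1.ne'
  have f0 := gi_fract hx 0
  have f1 := gi_fract hx 1
  have ha' : (a : ℝ) = cfTerm (rt r g) 0 := by exact_mod_cast ha
  have hb' : (b : ℝ) = cfTerm (rt r g) 1 := by exact_mod_cast hb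
  have g1 : gaussIter (rt r g) 1 = 1 / (rt r g - a) := by rw [ha']; rfl
  have g2 : gaussIter (rt r g) 2 = 1 / (gaussIter (rt r g) 1 - b) := by rw [hb']; rfl
  rw [← ha'] at f0
  rw [← hb'] at f1
  simp only [gaussIter] at f0
  have eA := runR hsq hg hr0 hr2 a (by linarith)
  have hA := inH_iter hsq hg a
  constructor
  · rw [add_comm, Function.iterate_add_apply, runL hsq hA hr hr0 hr2 b, eA, g2, g1]
    rw [eA, ← g1]; linarith
  · intro l hl hlt hR
    by_cases hla : l ≤ a
    · obtain ⟨j, rfl⟩ : ∃ j, l = j + 1 := ⟨l - 1, by omega⟩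
      have hla' : (j : ℝ) + 1 ≤ a := by exact_mod_cast hla
      have eB := runR hsq hg hr0 hr2 j (by linarith)
      have hB := inH_iter hsq hg j
      have hs := (sig_iff hB hr0 hr2).2 (by linarith)
      rw [Function.iterate_succ_apply'] at hR
      have := hR.2
      simp only [stp, if_pos hs] at this
      have := hB.2.1
      omega
    · obtain ⟨j, rfl⟩ : ∃ j, l = j + a := ⟨l - a, by omega⟩
      have hjb : (j : ℝ) + 1 ≤ b := by
        have : j + 1 ≤ b := by omega
        exact_mod_cast this
      rw [Function.iterate_add_apply] at hR
      have eB := runL hsq hA hr hr0 hr2 j (by rw [eA, ← g1]; linarith)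
      have hs := (sig_iff (inH_iter hsq hA j) hr0 hr2).1 hR.1
      rw [eB, eA, ← g1] at hs
      rw [one_lt_div (by linarith)] at hs
      linarith

end S11
namespace S11

/-- partial sums of partial quotients -/
noncomputable def wt (x : ℝ) (i : ℕ) : ℕ := ∑ j ∈ Finset.range (2 * i), (cfTerm x j).toNat

lemma wt_succ (x : ℝ) (i : ℕ) :
    wt x (i + 1) = ((cfTerm x (2 * i)).toNat + (cfTerm x (2 * i + 1)).toNat) + wt x i := by
  unfold wt
  rw [show 2 * (i + 1) = 2 * i + 1 + 1 by ring, Finset.sum_range_succ, Finset.sum_range_succ]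
  ring

lemma cf_pos' {x : ℝ} (hx : Irrational x) (h1 : 1 < x) (n : ℕ) : 1 ≤ cfTerm x n := by
  cases n with
  | zero =>
    unfold cfTerm
    rw [Int.le_floor]
    exact_mod_cast h1.le
  | succ n => exact cf_pos hx n

lemma orbitW {D : ℤ} (hsq : ¬ IsSquare D) {g : ℤ × ℤ × ℤ} (hg : InH D g) (hR : Red g) {r : ℝ}
    (hr : Irrational r) (hr0 : 0 < r) (hr2 : r ^ 2 = (D : ℝ))
     (i : ℕ) : rt r (stp^[wt (rt r g) i] g) = gaussIter (rt r g) (2 * i) := by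
  have hx := rt_irr hr hg.1.ne'
  have h1 := (sig_iff hg hr0 hr2).1 hR.1
  induction i with
  | zero => rfl
  | succ i ih =>
    have hH := inH_iter hsq hg (wt (rt r g) i)
    have p0 := cf_pos' hx h1 (2 * i)
    have p1 := cf_pos' hx h1 (2 * i + 1)
    rw [wt_succ, Function.iterate_add_apply]
    rw [(dbl hsq hH hr hr0 hr2 (a := (cfTerm (rt r g) (2 * i)).toNat)
      (b := (cfTerm (rt r g) (2 * i + 1)).toNat) ?_ ?_).1, ih, gi_add]
    · rfl
    · rw [ih, cf_add]; simp only [add_zero]; omega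
    · rw [ih, cf_add]; omega

lemma wt_lt {D : ℤ} {g : ℤ × ℤ × ℤ} (hg : InH D g) (hR : Red g) {r : ℝ}
    (hr : Irrational r) (hr0 : 0 < r) (hr2 : r ^ 2 = (D : ℝ))
     (i : ℕ) : wt (rt r g) i < wt (rt r g) (i + 1) := by
  have hx := rt_irr hr hg.1.ne'
  have h1 := (sig_iff hg hr0 hr2).1 hR.1
  have p0 := cf_pos' hx h1 (2 * i)
  rw [wt_succ]; omega

lemma ret {D : ℤ} (hsq : ¬ IsSquare D) {g : ℤ × ℤ × ℤ} (hg : InH D g) (hR : Red g) {r : ℝ}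
    (hr : Irrational r) (hr0 : 0 < r) (hr2 : r ^ 2 = (D : ℝ))
     (q : ℕ) (hq : Red (stp^[q] g)) : ∃ i, q = wt (rt r g) i := by
  have hx := rt_irr hr hg.1.ne'
  have h1 := (sig_iff hg hr0 hr2).1 hR.1
  have hw := wt_lt hg hR hr hr0 hr2
  have hex : ∀ q, ∃ i, wt (rt r g) i ≤ q ∧ q < wt (rt r g) (i + 1) := by
    intro q
    induction q with
    | zero => exact ⟨0, by simp [wt], by have := hw 0; omega⟩
    | succ q ih =>
      obtain ⟨i, h1, h2⟩ := ih
      by_cases h : q + 1 < wt (rt r g) (i + 1)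
      · exact ⟨i, by omega, h⟩
      · exact ⟨i + 1, by omega, by have := hw (i + 1); omega⟩
  obtain ⟨i, l1, l2⟩ := hex q
  refine ⟨i, ?_⟩
  by_contra hne
  have hH := inH_iter hsq hg (wt (rt r g) i)
  have p0 := cf_pos' hx h1 (2 * i)
  have p1 := cf_pos' hx h1 (2 * i + 1)
  have ih := orbitW hsq hg hR hr hr0 hr2 i
  rw [wt_succ] at l2
  refine (dbl hsq hH hr hr0 hr2 (a := (cfTerm (rt r g) (2 * i)).toNat)
      (b := (cfTerm (rt r g) (2 * i + 1)).toNat) ?_ ?_).2 (q - wt (rt r g) i) (by omega) (by omega) ?_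
  · rw [ih, cf_add]; simp only [add_zero]; omega
  · rw [ih, cf_add]; omega
  · rw [← Function.iterate_add_apply, Nat.sub_add_cancel l1]; exact hq

lemma wt_mono {D : ℤ} (hsq : ¬ IsSquare D) {g : ℤ × ℤ × ℤ} (hg : InH D g) (hR : Red g) {r : ℝ}
    (hr : Irrational r) (hr0 : 0 < r) (hr2 : r ^ 2 = (D : ℝ)) : StrictMono (wt (rt r g)) := strictMono_nat_of_lt_succ (wt_lt hg hR hr hr0 hr2)

lemma count {D : ℤ} (hsq : ¬ IsSquare D) {g : ℤ × ℤ × ℤ} (hg : InH D g) (hR : Red g) {r : ℝ}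
    (hr : Irrational r) (hr0 : 0 < r) (hr2 : r ^ 2 = (D : ℝ))
     (u : ℕ) (hu : 0 < u) (hper : ∀ j, cfTerm (rt r g) (j + 2 * u) = cfTerm (rt r g) j)
    (hmin : ∀ i, 0 < i → (∀ j, cfTerm (rt r g) (j + 2 * i) = cfTerm (rt r g) j) → u ≤ i) :
    {h : ℤ × ℤ × ℤ | SLEquiv g h ∧ 0 < h.1 ∧ h.2.1 < 0}.ncard = wt (rt r g) u := by
  have hx := rt_irr hr hg.1.ne'
  have hmono := wt_mono hsq hg hR hr hr0 hr2
  have hw0 : wt (rt r g) 0 = 0 := by simp [wt]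
  have hwu : 0 < wt (rt r g) u := by have := hmono hu; omega
  have hback : stp^[wt (rt r g) u] g = g := by
    have hH := inH_iter hsq hg (wt (rt r g) u)
    apply rt_inj hr hH.1.ne' hg.1.ne' (by rw [hH.2.2, hg.2.2])
    rw [orbitW hsq hg hR hr hr0 hr2]
    apply cf_unique (gi_irr hx _) hx
    intro n
    rw [cf_add, add_comm, hper]
  have hP : Function.IsPeriodicPt stp (wt (rt r g) u) g := hback
  have hq0 := hP.minimalPeriod_pos hwu
  have hq1 := hP.minimalPeriod_le hwu
  have hq : Function.minimalPeriod stp g = wt (rt r g) u := by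
    apply le_antisymm hq1
    have hb : stp^[Function.minimalPeriod stp g] g = g := Function.isPeriodicPt_minimalPeriod stp g
    obtain ⟨i, hi⟩ := ret hsq hg hR hr hr0 hr2 (Function.minimalPeriod stp g) (by rw [hb]; exact hR)
    rw [hi]
    apply hmono.monotone
    apply hmin i
    · rcases Nat.eq_zero_or_pos i with h | h
      · subst h; omega
      · exact h
    · intro j
      have := orbitW hsq hg hR hr hr0 hr2 i
      rw [← hi, hb] at this
      rw [add_comm, ← cf_add, ← this]
  have hset : {h : ℤ × ℤ × ℤ | SLEquiv g h ∧ 0 < h.1 ∧ h.2.1 < 0} =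
      (fun j => stp^[j] g) '' (Set.Iio (Function.minimalPeriod stp g)) := by
    ext h
    constructor
    · rintro ⟨h1, h2, h3⟩
      have hh : InH D h := ⟨h2, h3, by rw [sl_disc h1, hg.2.2]⟩
      have key : ∃ j, h = stp^[j] g := by
        rcases trans_orbit hsq hg hh h1 with h4 | ⟨j, hj⟩
        · exact h4
        · refine ⟨(wt (rt r g) u - 1) * j, ?_⟩
          apply iter_inj hsq j hh (inH_iter hsq hg _)
          rw [← hj, ← Function.iterate_add_apply]
          have : j + (wt (rt r g) u - 1) * j = wt (rt r g) u * j := by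
            obtain ⟨v, hv⟩ : ∃ v, wt (rt r g) u = v + 1 := ⟨wt (rt r g) u - 1, by omega⟩
            rw [hv]; simp; ring
          rw [this]
          exact (hP.mul_const j).symm
      obtain ⟨j, rfl⟩ := key
      exact ⟨j % Function.minimalPeriod stp g, Nat.mod_lt _ hq0,
        Function.iterate_mod_minimalPeriod_eq⟩
    · rintro ⟨j, -, rfl⟩
      have := inH_iter hsq hg j
      exact ⟨sl_iter g j, this.1, this.2.1⟩
  rw [hset, Set.InjOn.ncard_image Function.iterate_injOn_Iio_minimalPeriod, hq]
  simp

lemma ncard_flip (f : ℤ × ℤ × ℤ) :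
    {h : ℤ × ℤ × ℤ | SLEquiv f h ∧ h.1 < 0 ∧ 0 < h.2.1}.ncard =
    {h : ℤ × ℤ × ℤ | SLEquiv f h ∧ 0 < h.1 ∧ h.2.1 < 0}.ncard := by
  have hs : ∀ h : ℤ × ℤ × ℤ, SLEquiv h (h.2.1, h.1, -h.2.2) := by
    intro h
    refine ⟨0, -1, 1, 0, by norm_num, fun x y => ?_⟩
    simp only [qval]; ring
  have : {h : ℤ × ℤ × ℤ | SLEquiv f h ∧ h.1 < 0 ∧ 0 < h.2.1} =
      (fun h : ℤ × ℤ × ℤ => (h.2.1, h.1, -h.2.2)) ''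
        {h : ℤ × ℤ × ℤ | SLEquiv f h ∧ 0 < h.1 ∧ h.2.1 < 0} := by
    ext h
    constructor
    · rintro ⟨h1, h2, h3⟩
      exact ⟨(h.2.1, h.1, -h.2.2), ⟨sl_trans h1 (hs h), h3, h2⟩, by simp⟩
    · rintro ⟨g, ⟨h1, h2, h3⟩, rfl⟩
      exact ⟨sl_trans h1 (hs g), h3, h2⟩
  rw [this]
  apply Set.ncard_image_of_injective
  rintro ⟨a, b, c⟩ ⟨a', b', c'⟩ h
  simp only [Prod.mk.injEq, neg_inj] at h ⊢
  tauto

lemma list_sum (s : List ℤ) : s.sum = ∑ j ∈ Finset.range s.length, s.getD j 0 := by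
  induction s with
  | nil => simp
  | cons a s ih =>
    rw [List.length_cons, Finset.sum_range_succ', List.sum_cons, ih]
    simp [add_comm]

lemma window (c : ℕ → ℤ) (N p : ℕ) (h : ∀ j, c (N + j + p) = c (N + j)) (d : ℕ) :
    ∑ j ∈ Finset.range p, c (N + d + j) = ∑ j ∈ Finset.range p, c (N + j) := by
  induction d with
  | zero => simp
  | succ d ih =>
    rw [← ih]
    have h1 := Finset.sum_range_succ (fun j => c (N + d + j)) p
    have h2 := Finset.sum_range_succ' (fun j => c (N + d + j)) p
    have h3 := h d
    simp only [add_zero] at h2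
    have h4 : ∑ j ∈ Finset.range p, c (N + (d + 1) + j) =
        ∑ j ∈ Finset.range p, c (N + d + (j + 1)) :=
      Finset.sum_congr rfl fun j _ => by congr 1; ring
    rw [h4]
    linarith

end S11

theorem statement11 (m n k : ℤ)
    (hpos : 0 < formDisc (m, n, k)) (hsq : ¬ IsSquare (formDisc (m, n, k))) :
    ∀ s : List ℤ, IsCFPeriod s (xiPlus (m, n, k)) →
      (({g : ℤ × ℤ × ℤ | SLEquiv (m, n, k) g ∧ 0 < g.1 ∧ g.2.1 < 0}.ncard : ℤ)
          = (if Even s.length then s else s ++ s).sum ∧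
       ({g : ℤ × ℤ × ℤ | SLEquiv (m, n, k) g ∧ g.1 < 0 ∧ 0 < g.2.1}.ncard : ℤ)
          = (if Even s.length then s else s ++ s).sum) := by
  intro s hs
  rw [S11.ncard_flip, and_self]
  obtain ⟨hne, ⟨N, hN⟩, hmin⟩ := hs
  generalize hf : ((m, n, k) : ℤ × ℤ × ℤ) = f at *
  generalize hD : formDisc f = D at *
  have hPpos : 0 < s.length := List.length_pos_iff.2 hne
  generalize hP : s.length = P at *
  -- the square root
  let r : ℝ := Real.sqrt (D : ℝ)
  have hDr : (0 : ℝ) < D := by exact_mod_cast hpos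
  have hr0 : 0 < r := Real.sqrt_pos.2 hDr
  have hr2 : r ^ 2 = (D : ℝ) := Real.sq_sqrt hDr.le
  have hr : Irrational r := irrational_sqrt_intCast_iff.2 ⟨hsq, hpos.le⟩
  have hxi : xiPlus f = S11.rt r f := by simp only [xiPlus, S11.rt, hD, r]
  rw [hxi] at hN hmin
  have hm := S11.fst_ne hsq hD
  have hx := S11.rt_irr hr hm
  have hy := S11.rt_irr hr.neg hm
  have hxy : S11.rt r f ≠ S11.rt (-r) f := by
    have : (f.1 : ℝ) ≠ 0 := by exact_mod_cast hm
    intro h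
    unfold S11.rt at h
    rw [div_left_inj' (by positivity)] at h
    linarith
  obtain ⟨J, hJ⟩ := S11.cj_red hx hy hxy
  obtain ⟨g, h1, h2, h3⟩ := S11.rep hsq hD hr hr2 (J + N + 1)
  have hdg : formDisc g = D := by rw [S11.sl_disc h1, hD]
  obtain ⟨c1, c2⟩ := hJ (2 * (J + N + 1)) (by omega)
  obtain ⟨hg, hR⟩ := S11.red_of hsq hdg hr0 hr2
    (by rw [h2]; exact S11.gi_gt_one hx (2 * (J + N) + 1)) (by rw [h3]; exact c1)
    (by rw [h3]; exact c2)
  have hset : {h : ℤ × ℤ × ℤ | SLEquiv f h ∧ 0 < h.1 ∧ h.2.1 < 0} =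
      {h : ℤ × ℤ × ℤ | SLEquiv g h ∧ 0 < h.1 ∧ h.2.1 < 0} := by
    ext h
    exact ⟨fun H => ⟨S11.sl_trans (S11.sl_symm h1) H.1, H.2⟩,
      fun H => ⟨S11.sl_trans h1 H.1, H.2⟩⟩
  rw [hset]
  generalize hxx : S11.rt r f = x at *
  -- terms of the reduced root
  obtain ⟨d, hd⟩ : ∃ d, 2 * (J + N + 1) = N + d := ⟨2 * J + N + 2, by ring⟩
  have hc : ∀ j, cfTerm (S11.rt r g) j = cfTerm x (N + d + j) := by
    intro j; rw [h2, S11.cf_add, hd]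
  have hperP : ∀ j, cfTerm x (N + j + P) = cfTerm x (N + j) := by
    intro j; rw [add_assoc, hN, hN, Nat.add_mod_right]
  have hperM : ∀ q j, cfTerm x (N + j + q * P) = cfTerm x (N + j) := by
    intro q
    induction q with
    | zero => intro j; simp
    | succ q ih =>
      intro j
      rw [← ih j, show N + j + (q + 1) * P = N + (j + q * P) + P by ring, hperP, ← add_assoc]
  -- minimality
  have hdvd : ∀ L, (∀ j, cfTerm (S11.rt r g) (j + L) = cfTerm (S11.rt r g) j) → P ∣ L := by
    intro L hL
    rw [Nat.dvd_iff_mod_eq_zero]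
    by_contra hne0
    have hlt := Nat.mod_lt L hPpos
    have := hmin (L % P) (by omega) ⟨N + d, by omega, ?_⟩
    · omega
    · intro j
      have e1 := hL j
      rw [hc, hc] at e1
      rw [← e1]
      have e2 := hperM (L / P) (d + j + L % P)
      rw [show N + d + j + L % P = N + (d + j + L % P) by ring, ← e2]
      congr 1
      have := Nat.mod_add_div L P
      rw [mul_comm] at this
      omega
  have hsum : ∑ j ∈ Finset.range P, cfTerm x (N + j) = s.sum := by
    rw [S11.list_sum, hP]
    apply Finset.sum_congr rfl
    intro j hj
    rw [hN, Nat.mod_eq_of_lt (Finset.mem_range.1 hj)]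
  obtain ⟨u, hu0, hPu, hul, husum⟩ : ∃ u, 0 < u ∧ P ∣ 2 * u ∧ (∀ i, 0 < i → P ∣ 2 * i → u ≤ i) ∧
      ∑ j ∈ Finset.range (2 * u), cfTerm x (N + j) = (if Even P then s else s ++ s).sum := by
    by_cases hev : Even P
    · obtain ⟨u, hu⟩ := hev
      have h2u : 2 * u = P := by omega
      refine ⟨u, by omega, by rw [h2u], ?_, ?_⟩
      · intro i hi hdv
        have := Nat.le_of_dvd (by omega) hdv
        omega
      · rw [if_pos ⟨u, hu⟩, h2u, hsum]
    · refine ⟨P, hPpos, Dvd.intro_left 2 rfl, ?_, ?_⟩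
      · intro i hi hdv
        have hco : Nat.Coprime P 2 := (Nat.not_even_iff_odd.1 hev).coprime_two_right
        exact Nat.le_of_dvd hi (hco.dvd_of_dvd_mul_left hdv)
      · rw [if_neg hev, List.sum_append, two_mul, Finset.sum_range_add, hsum]
        congr 1
        rw [← hsum]
        apply Finset.sum_congr rfl
        intro j _
        rw [← hperP j]
        congr 1; ring
  have hper2 : ∀ j, cfTerm x (N + j + 2 * u) = cfTerm x (N + j) := by
    obtain ⟨q, hq⟩ := hPu
    intro j
    rw [hq, mul_comm]
    exact hperM q j
  rw [S11.count hsq hg hR hr hr0 hr2 u hu0 ?_ ?_, ← husum, ← S11.window _ N (2 * u) hper2 d, S11.wt]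
  · push_cast
    apply Finset.sum_congr rfl
    intro j _
    rw [← hc]
    have := S11.cf_pos' (S11.rt_irr hr hg.1.ne') ((S11.sig_iff hg hr0 hr2).1 hR.1) j
    omega
  · intro j
    rw [hc, hc, add_assoc N d j, ← hper2]
    congr 1; ring
  · intro i hi hL
    exact hul i hi (hdvd _ hL)
end

section
/- Let f=(m,n,k) be an integer binary quadratic form with discriminant Δ=k²−4mn>0 not a perfect square, let Γ(f)=[a_1,…,a_P] be the period of the continued fraction of ξ⁺(f), and let Π(f)=[a_1,…,a_p] be Γ(f) if P is even and Γ(f) repeated twice (p=2P) if P is odd. If P is odd, or if P is even and Γ(f) is palindromic, then the sum of the odd-indexed entries of Π(f) equals the sum of the even-indexed entries of Π(f), each being equal to (a_1+⋯+a_p)/2. -/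
/-- The sum of the entries of the list `l` sitting at positions congruent to `r` mod 2
(positions counted from 0). -/
def idxSum (l : List ℤ) (r : ℕ) : ℤ :=
  ∑ i ∈ Finset.range l.length, if i % 2 = r then l.getD i 0 else 0

theorem idxSum_cons_zero (a : ℤ) (l : List ℤ) : idxSum (a :: l) 0 = a + idxSum l 1 := by
  unfold idxSum
  rw [List.length_cons, Finset.sum_range_succ', add_comm]
  congr 1
  refine Finset.sum_congr rfl fun i _ => ?_
  have h : (i + 1) % 2 = 0 ↔ i % 2 = 1 := by omega
  simp [h]

theorem idxSum_cons_one (a : ℤ) (l : List ℤ) : idxSum (a :: l) 1 = idxSum l 0 := by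
  unfold idxSum
  rw [List.length_cons, Finset.sum_range_succ']
  have h : ∀ i : ℕ, (i + 1) % 2 = 1 ↔ i % 2 = 0 := by omega
  simp [h]

theorem idxSum_add (l : List ℤ) : idxSum l 0 + idxSum l 1 = l.sum := by
  induction l with
  | nil => simp [idxSum]
  | cons a l ih => rw [idxSum_cons_zero, idxSum_cons_one, List.sum_cons, ← ih]; ring

theorem idxSum_append (l l' : List ℤ) :
    idxSum (l ++ l') 0 - idxSum (l ++ l') 1 =
      (idxSum l 0 - idxSum l 1) + (-1) ^ l.length * (idxSum l' 0 - idxSum l' 1) := by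
  induction l with
  | nil => simp [idxSum]
  | cons a l ih =>
    rw [List.cons_append, idxSum_cons_zero, idxSum_cons_one, idxSum_cons_zero,
      idxSum_cons_one, List.length_cons, pow_succ]
    linear_combination -ih

theorem idxSum_single (a : ℤ) : idxSum [a] 0 - idxSum [a] 1 = a := by
  simp [idxSum]

theorem idxSum_reverse (l : List ℤ) :
    idxSum l.reverse 0 - idxSum l.reverse 1 =
      -(-1) ^ l.length * (idxSum l 0 - idxSum l 1) := by
  induction l with
  | nil => simp [idxSum]
  | cons a l ih =>
    rw [List.reverse_cons, idxSum_append, idxSum_single, ih, idxSum_cons_zero,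
      idxSum_cons_one, List.length_reverse, List.length_cons, pow_succ]
    ring

theorem idxSum_rotate (n : ℕ) : ∀ l : List ℤ, Even l.length →
    idxSum (l.rotate n) 0 = idxSum (l.rotate n) 1 → idxSum l 0 = idxSum l 1 := by
  induction n with
  | zero => intro l _ h; simpa using h
  | succ n ih =>
    intro l hl h
    cases l with
    | nil => simp [idxSum]
    | cons a l =>
      rw [List.rotate_cons_succ] at h
      have h2 := ih (l ++ [a]) (by simpa using hl) h
      have h3 := idxSum_append l [a]
      have hodd : Odd l.length := by
        rw [List.length_cons] at hl
        exact Nat.not_even_iff_odd.mp (Nat.even_add_one.mp hl)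
      rw [idxSum_single, hodd.neg_one_pow, h2] at h3
      rw [idxSum_cons_zero, idxSum_cons_one]
      linarith

/-- If the period `Γ` is odd, or even and palindromic, then (with `Π = Γ` for even
period and `Π = Γ²` for odd period) the sum of the odd-indexed entries of `Π` equals
the sum of its even-indexed entries, each being half of the total sum. -/
theorem statement12 (m n k : ℤ)
    (hpos : 0 < formDisc (m, n, k)) (hsq : ¬ IsSquare (formDisc (m, n, k))) :
    ∀ s : List ℤ, IsCFPeriod s (xiPlus (m, n, k)) →
      (Odd s.length ∨ (Even s.length ∧ Palindromic s)) →
      idxSum (if Even s.length then s else s ++ s) 0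
          = idxSum (if Even s.length then s else s ++ s) 1 ∧
        2 * idxSum (if Even s.length then s else s ++ s) 0
          = (if Even s.length then s else s ++ s).sum := by
  intro s _ h
  have key : idxSum (if Even s.length then s else s ++ s) 0
      = idxSum (if Even s.length then s else s ++ s) 1 := by
    by_cases he : Even s.length
    · rw [if_pos he]
      rcases h with h | ⟨_, t, ⟨r, hr⟩, ht⟩
      · exact absurd he (Nat.not_even_iff_odd.mpr h)
      · apply idxSum_rotate r s he
        rw [hr]
        have h1 := idxSum_reverse t
        have hlen : Even t.length := by rw [← hr, List.length_rotate]; exact he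
        rw [ht, hlen.neg_one_pow] at h1
        linarith
    · rw [if_neg he]
      have h1 := idxSum_append s s
      rw [(Nat.not_even_iff_odd.mp he).neg_one_pow] at h1
      linarith
  refine ⟨key, ?_⟩
  rw [← idxSum_add, ← key]
  ring
end

section
/- Let m,k be integers with k>m>0, let [a_1,…,a_L] be the even continued fraction of the rational number k/m, and set t=(a_1+⋯+a_L)−1. Then the number of integer triples (m',n',k') that are SL(2,ℤ)-equivalent to the form (m,0,k) and satisfy m'>0 and n'<0 is exactly t, and likewise the number of triples equivalent to (m,0,k) with m'<0 and n'>0 is exactly t. -/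
/-- The value of a finite regular continued fraction `[a₁, …, a_N]` as a rational number. -/
def cfEval : List ℤ → ℚ
  | [] => 0
  | [a] => (a : ℚ)
  | a :: l => (a : ℚ) + 1 / cfEval l

/-- Nonnegative matrices of determinant one compatible with the pair `(m, n)`. -/
def matSet (m n : ℤ) : Set (ℤ × ℤ × ℤ × ℤ) :=
  {p | 0 ≤ p.1 ∧ 0 ≤ p.2.1 ∧ 0 ≤ p.2.2.1 ∧ 0 ≤ p.2.2.2 ∧
    p.1 * p.2.2.2 - p.2.1 * p.2.2.1 = 1 ∧
    0 < p.2.2.2 * m - p.2.1 * n ∧ 0 < p.1 * n - p.2.2.1 * m}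

theorem matSet_swap (m n : ℤ) : (matSet m n).encard = (matSet n m).encard := by
  have inj : Function.Injective
      (fun p : ℤ × ℤ × ℤ × ℤ => ((p.2.2.2, p.2.2.1, p.2.1, p.1) : ℤ × ℤ × ℤ × ℤ)) := by
    rintro ⟨a, b, c, d⟩ ⟨a', b', c', d'⟩ h
    simp only [Prod.mk.injEq] at h ⊢
    tauto
  rw [← inj.encard_image (matSet m n)]
  congr 1
  ext ⟨a, b, c, d⟩
  simp only [matSet, Set.mem_image, Set.mem_ofPred_eq, Prod.exists, Prod.mk.injEq]
  constructor
  · rintro ⟨a', b', c', d', ⟨h1, h2, h3, h4, h5, h6, h7⟩, rfl, rfl, rfl, rfl⟩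
    exact ⟨h4, h3, h2, h1, by linarith, h7, h6⟩
  · rintro ⟨h1, h2, h3, h4, h5, h6, h7⟩
    exact ⟨d, c, b, a, ⟨h4, h3, h2, h1, by linarith, h7, h6⟩, rfl, rfl, rfl, rfl⟩

/-- The row alternative for nonnegative matrices of determinant one. -/
theorem row_alt (a b c d : ℤ) (ha : 0 ≤ a) (hb : 0 ≤ b) (hc : 0 ≤ c) (hd : 0 ≤ d)
    (h : a * d - b * c = 1) :
    (a = 1 ∧ b = 0 ∧ c = 0 ∧ d = 1) ∨ (c ≤ a ∧ d ≤ b) ∨ (a ≤ c ∧ b ≤ d) := by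
  rcases le_or_gt c a with h1 | h1 <;> rcases le_or_gt d b with h2 | h2
  · tauto
  · rcases eq_or_lt_of_le h1 with h3 | h3
    · right; right; constructor <;> linarith
    · left
      have hd1 : d + c ≤ 1 := by nlinarith
      have hd0 : d = 1 := by omega
      have hc0 : c = 0 := by omega
      subst hd0 hc0
      refine ⟨by linarith, by omega, rfl, rfl⟩
  · exfalso; nlinarith
  · right; right; constructor <;> linarith

theorem matSet_self (m : ℤ) (hm : 0 < m) : (matSet m m).encard = 1 := by
  rw [Set.encard_eq_one]
  refine ⟨(1, 0, 0, 1), ?_⟩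
  ext ⟨a, b, c, d⟩
  simp only [matSet, Set.mem_ofPred_eq, Set.mem_singleton_iff, Prod.mk.injEq]
  constructor
  · rintro ⟨h1, h2, h3, h4, h5, h6, h7⟩
    rcases row_alt a b c d h1 h2 h3 h4 h5 with h | h | h
    · exact h
    · exfalso; nlinarith
    · exfalso; nlinarith
  · rintro ⟨rfl, rfl, rfl, rfl⟩
    simp [hm]

theorem matSet_step (m n : ℤ) (hm : 0 < m) (hn : 0 < n) :
    (matSet (m + n) n).encard = (matSet m n).encard + 1 := by
  have inj : Function.Injective
      (fun p : ℤ × ℤ × ℤ × ℤ =>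
        ((p.1 + p.2.2.1, p.2.1 + p.2.2.2, p.2.2.1, p.2.2.2) : ℤ × ℤ × ℤ × ℤ)) := by
    rintro ⟨a, b, c, d⟩ ⟨a', b', c', d'⟩ h
    simp only [Prod.mk.injEq] at h ⊢
    omega
  rw [← inj.encard_image (matSet m n), ← Set.encard_insert_of_notMem (a := (1, 0, 0, 1))]
  · congr 1
    ext ⟨a, b, c, d⟩
    simp only [matSet, Set.mem_insert_iff, Set.mem_image, Set.mem_ofPred_eq, Prod.exists,
      Prod.mk.injEq]
    constructor
    · rintro ⟨h1, h2, h3, h4, h5, h6, h7⟩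
      rcases row_alt a b c d h1 h2 h3 h4 h5 with h | h | h
      · exact Or.inl h
      · right
        refine ⟨a - c, b - d, c, d, ⟨by linarith, by linarith, h3, h4, by linarith,
          by linarith, by linarith⟩, by ring, by ring, rfl, rfl⟩
      · exfalso; nlinarith
    · rintro (⟨rfl, rfl, rfl, rfl⟩ | ⟨a', b', c', d', ⟨h1, h2, h3, h4, h5, h6, h7⟩,
        rfl, rfl, rfl, rfl⟩)
      · refine ⟨by norm_num, by norm_num, by norm_num, by norm_num, by norm_num, ?_, ?_⟩ <;>
          linarith
      · refine ⟨by linarith, by linarith, h3, h4, by linarith, by linarith, by linarith⟩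
  · simp only [matSet, Set.mem_image, Set.mem_ofPred_eq, Prod.exists, Prod.mk.injEq, not_exists]
    rintro a b c d ⟨⟨h1, h2, h3, h4, h5, h6, h7⟩, h8, h9, h10, h11⟩
    omega

theorem matSet_add_mul (m n : ℤ) (hm : 0 < m) (hn : 0 < n) (a : ℕ) :
    (matSet m (n + a * m)).encard = (matSet m n).encard + a := by
  induction a with
  | zero => simp
  | succ a ih =>
    have h0 : 0 < n + a * m := by positivity
    have := matSet_step (n + a * m) m h0 hm
    rw [matSet_swap, matSet_swap (n + a * m) m, ih] at this
    push_cast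
    rw [← add_assoc, ← this]
    congr 2
    ring

theorem matSet_cf (l : List ℤ) (hl : l ≠ []) (hpos : ∀ a ∈ l, 1 ≤ a) :
    0 < cfEval l ∧ ∀ m k : ℤ, 0 < m → 0 < k → cfEval l = (k : ℚ) / (m : ℚ) →
      ∃ t : ℕ, (t : ℤ) = l.sum ∧ (matSet m k).encard = t := by
  induction l with
  | nil => exact absurd rfl hl
  | cons a l ih =>
    have ha : 1 ≤ a := hpos a (by simp)
    have haq : (1 : ℚ) ≤ a := by exact_mod_cast ha
    cases l with
    | nil =>
      refine ⟨by simp only [cfEval]; linarith, ?_⟩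
      intro m k hm hk h
      have hmq : (0 : ℚ) < m := by exact_mod_cast hm
      simp only [cfEval] at h
      rw [eq_div_iff hmq.ne'] at h
      have h' : a * m = k := by exact_mod_cast h
      obtain ⟨b, hb⟩ : ∃ b : ℕ, a = b + 1 := ⟨(a - 1).toNat, by omega⟩
      refine ⟨b + 1, by simp [hb], ?_⟩
      have := matSet_add_mul m m hm hm b
      rw [matSet_self m hm] at this
      rw [← h', hb]
      rw [show ((b : ℤ) + 1) * m = m + b * m by ring, this]
      push_cast
      ring
    | cons b l =>
      obtain ⟨hp, ih⟩ := ih (by simp) (fun x hx => hpos x (List.mem_cons_of_mem _ hx))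
      have e : cfEval (a :: b :: l) = (a : ℚ) + 1 / cfEval (b :: l) := rfl
      rw [e]
      refine ⟨by positivity, ?_⟩
      intro m k hm hk h
      have hmq : (0 : ℚ) < m := by exact_mod_cast hm
      have h1 : 1 / cfEval (b :: l) = ((k - a * m : ℤ) : ℚ) / m := by
        push_cast
        field_simp at h ⊢
        linarith
      have hpos1 : 0 < k - a * m := by
        have : (0 : ℚ) < ((k - a * m : ℤ) : ℚ) / m := by rw [← h1]; positivity
        have := (div_pos_iff_of_pos_right hmq).1 this
        exact_mod_cast this
      have h2 : cfEval (b :: l) = (m : ℚ) / ((k - a * m : ℤ) : ℚ) := by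
        rw [← inv_div, ← h1]; simp
      obtain ⟨t, ht, hc⟩ := ih _ _ hpos1 hm h2
      obtain ⟨c, hca⟩ : ∃ c : ℕ, a = c := ⟨a.toNat, by omega⟩
      refine ⟨t + c, ?_, ?_⟩
      · rw [List.sum_cons, ← ht, hca]; push_cast; ring
      · have := matSet_add_mul m (k - a * m) hm hpos1 c
        rw [matSet_swap m (k - a * m), hc, hca] at this
        rw [show k - (c : ℤ) * m + c * m = k by ring] at this
        rw [this]; push_cast; rfl

/-- The form attached to a matrix. -/
def toForm (m n : ℤ) (p : ℤ × ℤ × ℤ × ℤ) : ℤ × ℤ × ℤ :=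
  ((p.2.1 + p.2.2.2) * (p.2.2.2 * m - p.2.1 * n),
    -((p.1 + p.2.2.1) * (p.1 * n - p.2.2.1 * m)),
    (p.2.1 + p.2.2.2) * (p.1 * n - p.2.2.1 * m) - (p.1 + p.2.2.1) * (p.2.2.2 * m - p.2.1 * n))

theorem toForm_inj (m n : ℤ) (hm : 0 < m) (hn : 0 < n) : Set.InjOn (toForm m n) (matSet m n) := by
  rintro ⟨α, β, γ, δ⟩ hp ⟨α', β', γ', δ'⟩ hp' h
  obtain ⟨a, ha⟩ : ∃ a, a = β + δ := ⟨_, rfl⟩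
  obtain ⟨q, hq⟩ : ∃ q, q = α + γ := ⟨_, rfl⟩
  obtain ⟨r, hr⟩ : ∃ r, r = δ * m - β * n := ⟨_, rfl⟩
  obtain ⟨s, hs⟩ : ∃ s, s = α * n - γ * m := ⟨_, rfl⟩
  obtain ⟨a', ha'⟩ : ∃ a, a = β' + δ' := ⟨_, rfl⟩
  obtain ⟨q', hq'⟩ : ∃ q, q = α' + γ' := ⟨_, rfl⟩
  obtain ⟨r', hr'⟩ : ∃ r, r = δ' * m - β' * n := ⟨_, rfl⟩
  obtain ⟨s', hs'⟩ : ∃ s, s = α' * n - γ' * m := ⟨_, rfl⟩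
  simp only [matSet, Set.mem_ofPred_eq] at hp hp'
  simp only [toForm, Prod.mk.injEq] at h
  rw [← hr, ← hs] at hp
  rw [← hr', ← hs'] at hp'
  rw [← ha, ← hq, ← hr, ← hs, ← ha', ← hq', ← hr', ← hs'] at h
  obtain ⟨p1, p2, p3, p4, det, r0, s0⟩ := hp
  obtain ⟨p1', p2', p3', p4', det', r0', s0'⟩ := hp'
  obtain ⟨e1, e2, e3⟩ := h
  have k1 : a * s + q * r = m + n := by
    rw [ha, hq, hr, hs]; linear_combination (m + n) * det
  have k1' : a' * s' + q' * r' = m + n := by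
    rw [ha', hq', hr', hs']; linear_combination (m + n) * det'
  have m1 : α * r + β * s = m := by rw [hr, hs]; linear_combination m * det
  have m1' : α' * r' + β' * s' = m := by rw [hr', hs']; linear_combination m * det'
  have d1 : α * a - β * q = 1 := by rw [ha, hq]; linear_combination det
  have d1' : α' * a' - β' * q' = 1 := by rw [ha', hq']; linear_combination det'
  have a0 : 0 < a := by
    rcases eq_or_lt_of_le p4 with h | h
    · rw [← h] at det; nlinarith
    · linarith
  have a0' : 0 < a' := by
    rcases eq_or_lt_of_le p4' with h | h
    · rw [← h] at det'; nlinarith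
    · linarith
  have e4 : q * r = q' * r' := by linarith
  have cross : a * q' = a' * q := by
    have : (a * q' - a' * q) * (r * r') = 0 := by
      linear_combination (q' * r') * e1 - (a' * r') * e4
    rcases mul_eq_zero.1 this with h | h
    · linarith
    · exact absurd h (by positivity)
  have aa : a = a' := by
    apply Int.dvd_antisymm a0.le a0'.le
    · exact ⟨α * a' - β * q', by linear_combination (-a') * d1 - (-β) * cross⟩
    · exact ⟨α' * a - β' * q, by linear_combination (-a) * d1' - β' * cross⟩
  subst aa
  have qq : q' = q := mul_left_cancel₀ a0.ne' cross
  have rr : r = r' := mul_left_cancel₀ a0.ne' e1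
  have ss : s = s' := mul_left_cancel₀ a0.ne' (by linarith)
  subst qq rr ss
  have kne : a * s + q' * r ≠ 0 := by linarith
  have αα : α = α' := by
    have : (α - α') * (a * s + q' * r) = 0 := by
      linear_combination s * (d1 - d1') + q' * (m1 - m1')
    rcases mul_eq_zero.1 this with h | h
    · linarith
    · exact absurd h kne
  have ββ : β = β' := by
    have : (β - β') * (a * s + q' * r) = 0 := by
      linear_combination a * (m1 - m1') - r * (d1 - d1')
    rcases mul_eq_zero.1 this with h | h
    · linarith
    · exact absurd h kne
  simp only [Prod.mk.injEq]
  refine ⟨αα, ββ, by linarith, by linarith⟩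

theorem mem_image_toForm (m n : ℤ) (hm : 0 < m) (hn : 0 < n) (a b c d x y z : ℤ)
    (ha : 0 < a) (det : a * d - b * c = 1)
    (hx : x = a * (m * a + (m + n) * c)) (hy : y = b * (m * b + (m + n) * d))
    (hz : z = a * (m * b + (m + n) * d) + b * (m * a + (m + n) * c))
    (x0 : 0 < x) (y0 : y < 0) : (x, y, z) ∈ toForm m n '' matSet m n := by
  obtain ⟨r, hr⟩ : ∃ r, r = m * a + (m + n) * c := ⟨_, rfl⟩
  obtain ⟨s, hs⟩ : ∃ s, s = m * b + (m + n) * d := ⟨_, rfl⟩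
  rw [← hr] at hx
  rw [← hs] at hy
  have r0 : 0 < r := by
    rw [hx] at x0
    exact pos_of_mul_pos_right x0 ha.le
  have k1 : a * s - b * r = m + n := by rw [hr, hs]; linear_combination (m + n) * det
  have hbs : b < 0 ∧ 0 < s := by
    rw [hy] at y0
    rcases mul_neg_iff.1 y0 with ⟨h1, h2⟩ | h
    · exfalso; nlinarith
    · exact h
  obtain ⟨b0, s0⟩ := hbs
  have as0 : 0 < a * s := by positivity
  have br0 : 0 < -b * r := mul_pos (by linarith) r0
  have hd : 0 ≤ d := by
    by_contra! h
    nlinarith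
  have hc : c ≤ 0 := by
    by_contra! h
    nlinarith
  have hac : 0 ≤ a + c := by
    have : 0 < (m + n) * (a + c) := by nlinarith
    exact (pos_of_mul_pos_right this (by linarith)).le
  have hbd : b + d ≤ 0 := by
    by_contra! h
    have h1 : (m + n) * 1 ≤ (m + n) * (b + d) := by
      apply mul_le_mul_of_nonneg_left <;> linarith
    nlinarith
  refine ⟨(d, -c, -b - d, a + c), ⟨hd, ?_, ?_, hac, ?_, ?_, ?_⟩, ?_⟩
  · simpa using hc
  · show 0 ≤ -b - d
    linarith
  · show d * (a + c) - -c * (-b - d) = 1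
    linear_combination det
  · show 0 < (a + c) * m - -c * n
    linarith
  · show 0 < d * n - (-b - d) * m
    linarith
  · simp only [toForm, Prod.mk.injEq]
    rw [hx, hy, hz, hr, hs]
    refine ⟨by ring, by ring, by ring⟩

theorem image_toForm (m n : ℤ) (hm : 0 < m) (hn : 0 < n) :
    {g : ℤ × ℤ × ℤ | SLEquiv (m, 0, m + n) g ∧ 0 < g.1 ∧ g.2.1 < 0}
      = toForm m n '' matSet m n := by
  ext ⟨x, y, z⟩
  constructor
  · rintro ⟨⟨a, b, c, d, det, h⟩, x0, y0⟩
    have h1 := h 1 0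
    have h2 := h 0 1
    have h3 := h 1 1
    simp only [qval] at h1 h2 h3 x0 y0
    have hx : x = a * (m * a + (m + n) * c) := by linear_combination h1
    have hy : y = b * (m * b + (m + n) * d) := by linear_combination h2
    have hz : z = a * (m * b + (m + n) * d) + b * (m * a + (m + n) * c) := by
      linear_combination h3 - h1 - h2
    rcases lt_trichotomy a 0 with ha | ha | ha
    · exact mem_image_toForm m n hm hn (-a) (-b) (-c) (-d) x y z (by linarith) (by linarith)
        (by rw [hx]; ring) (by rw [hy]; ring) (by rw [hz]; ring) x0 y0
    · rw [ha] at hx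
      simp at hx
      exact absurd hx x0.ne'
    · exact mem_image_toForm m n hm hn a b c d x y z ha det hx hy hz x0 y0
  · rintro ⟨⟨α, β, γ, δ⟩, ⟨p1, p2, p3, p4, det, r0, s0⟩, h⟩
    simp only [toForm] at p1 p2 p3 p4 det r0 s0
    have a0 : 0 < β + δ := by
      rcases eq_or_lt_of_le p4 with h | h
      · rw [← h] at det; nlinarith
      · linarith
    have q0 : 0 < α + γ := by
      rcases eq_or_lt_of_le p1 with h | h
      · rw [← h] at det; nlinarith
      · linarith
    rw [← h]
    refine ⟨⟨β + δ, -(α + γ), -β, α, by linear_combination det, fun X Y => ?_⟩, ?_, ?_⟩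
    · simp only [toForm, qval]
      ring
    · exact mul_pos a0 r0
    · exact neg_neg_of_pos (mul_pos q0 s0)

theorem other_image (f : ℤ × ℤ × ℤ) :
    {g : ℤ × ℤ × ℤ | SLEquiv f g ∧ g.1 < 0 ∧ 0 < g.2.1}
      = (fun g : ℤ × ℤ × ℤ => ((g.2.1, g.1, -g.2.2) : ℤ × ℤ × ℤ)) ''
        {g : ℤ × ℤ × ℤ | SLEquiv f g ∧ 0 < g.1 ∧ g.2.1 < 0} := by
  have key : ∀ x y z : ℤ, SLEquiv f (x, y, z) → SLEquiv f (y, x, -z) := by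
    rintro x y z ⟨a, b, c, d, h, hq⟩
    refine ⟨-b, a, -d, c, by linarith, fun X Y => ?_⟩
    have := hq Y (-X)
    rw [show -b * X + a * Y = a * Y + b * (-X) by ring,
      show -d * X + c * Y = c * Y + d * (-X) by ring, ← this]
    simp only [qval]
    ring
  ext ⟨x, y, z⟩
  simp only [Set.mem_image, Set.mem_ofPred_eq, Prod.exists, Prod.mk.injEq]
  constructor
  · rintro ⟨h, h1, h2⟩
    exact ⟨y, x, -z, ⟨key _ _ _ h, h2, h1⟩, rfl, rfl, by ring⟩
  · rintro ⟨x', y', z', ⟨h, h1, h2⟩, rfl, rfl, rfl⟩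
    exact ⟨key _ _ _ h, h2, h1⟩

/-- If `[a₁, …, a_L]` is the even continued fraction of `k/m` (for `k > m > 0`) and
`t = a₁ + ⋯ + a_L − 1`, then the class of `(m,0,k)` has exactly `t` points with
`m' > 0, n' < 0` and exactly `t` points with `m' < 0, n' > 0`. -/
theorem statement13 (m k : ℤ) (hm : 0 < m) (hk : m < k)
    (l : List ℤ) (hpos : ∀ a ∈ l, 1 ≤ a) (hlen : Even l.length)
    (hval : cfEval l = (k : ℚ) / (m : ℚ)) :
    ({g : ℤ × ℤ × ℤ | SLEquiv (m, 0, k) g ∧ 0 < g.1 ∧ g.2.1 < 0}.ncard : ℤ)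
        = l.sum - 1 ∧
      ({g : ℤ × ℤ × ℤ | SLEquiv (m, 0, k) g ∧ g.1 < 0 ∧ 0 < g.2.1}.ncard : ℤ)
        = l.sum - 1 := by
  have hl : l ≠ [] := by
    rintro rfl
    have hmq : (0 : ℚ) < m := by exact_mod_cast hm
    have hkq : (0 : ℚ) < k := by exact_mod_cast hm.trans hk
    have : (0 : ℚ) < k / m := by positivity
    rw [← hval] at this
    simp [cfEval] at this
  obtain ⟨t, ht, hc⟩ := (matSet_cf l hl hpos).2 m k hm (hm.trans hk) hval
  obtain ⟨n, rfl⟩ : ∃ n, k = m + n := ⟨k - m, by ring⟩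
  have hn : 0 < n := by linarith
  have h1 := matSet_step n m hn hm
  rw [add_comm n m, matSet_swap, hc, matSet_swap n m] at h1
  have hfin : (matSet m n).Finite := by
    rw [← Set.encard_ne_top_iff]
    intro h
    rw [h] at h1
    simp at h1
  have h2 : ((matSet m n).ncard : ℤ) = l.sum - 1 := by
    rw [← hfin.cast_ncard_eq] at h1
    have h3 : t = (matSet m n).ncard + 1 := by exact_mod_cast h1
    omega
  have h3 : {g : ℤ × ℤ × ℤ | SLEquiv (m, 0, m + n) g ∧ 0 < g.1 ∧ g.2.1 < 0}.ncard
      = (matSet m n).ncard := by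
    rw [image_toForm m n hm hn, Set.ncard_image_of_injOn (toForm_inj m n hm hn)]
  refine ⟨by rw [h3, h2], ?_⟩
  rw [other_image, Set.ncard_image_of_injective, h3, h2]
  rintro ⟨a, b, c⟩ ⟨a', b', c'⟩ h
  simp only [Prod.mk.injEq, neg_inj] at h ⊢
  tauto
end

section
/- Let k be a positive integer and m an integer with 0≤m<k. The form (m,0,k) is SL(2,ℤ)-equivalent to both its conjugate (m,0,−k) and its adjoint (0,−m,k) (i.e., its class is supersymmetric) if and only if m=0, or k is even and m=k/2. -/
theorem key_aux (m k : ℤ) (hm : 0 ≤ m) (hk : m < k) (u v : ℤ) (hu : 0 < u)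
    (hmu : m = u * v) (hku : k = u ∨ k = 2 * u) : m = 0 ∨ (Even k ∧ 2 * m = k) := by
  have hv0 : 0 ≤ v := by
    by_contra hv
    push Not at hv
    nlinarith
  have hv2 : v < 2 := by
    by_contra hv
    push Not at hv
    rcases hku with h | h <;> nlinarith
  have : v = 0 ∨ v = 1 := by omega
  rcases this with rfl | rfl
  · left; simpa using hmu
  · right
    rcases hku with h | h
    · omega
    · exact ⟨⟨u, by omega⟩, by omega⟩

/-- For `0 ≤ m < k`, the class of `(m,0,k)` is supersymmetric iff `m = 0`, or `k` is
even and `m = k/2`. -/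
theorem statement14 (m k : ℤ) (hm : 0 ≤ m) (hk : m < k) (hkpos : 0 < k) :
    (SLEquiv (m, 0, k) (conjF (m, 0, k)) ∧ SLEquiv (m, 0, k) (adjF (m, 0, k))) ↔
      (m = 0 ∨ (Even k ∧ 2 * m = k)) := by
  constructor
  · rintro ⟨⟨a, b, c, d, hdet, h⟩, ⟨a', b', c', d', hdet', h'⟩⟩
    have h1 := h 1 0
    have h2 := h 0 1
    have h3 := h 1 1
    have h1' := h' 1 0
    have h2' := h' 0 1
    have h3' := h' 1 1
    simp only [qval, conjF, adjF] at h1 h2 h3 h1' h2' h3'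
    have e0 : b * (m * b + k * d) = 0 := by linear_combination -h2
    have hb : b ≠ 0 := by
      rintro rfl
      have : 2 * k = 0 := by linear_combination (-k) * hdet - h3 + h1 + h2
      omega
    have e1 : m * b + k * d = 0 := (mul_eq_zero.mp e0).resolve_left hb
    have e0' : a' * (m * a' + k * c') = 0 := by linear_combination -h1'
    have ha' : a' ≠ 0 := by
      rintro rfl
      have : 2 * k = 0 := by linear_combination h3' - h1' - h2' - k * hdet'
      omega
    have e1' : m * a' + k * c' = 0 := (mul_eq_zero.mp e0').resolve_left ha'
    obtain ⟨t, ht⟩ : ∃ t, t = m * a + k * c := ⟨_, rfl⟩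
    obtain ⟨s, hs⟩ : ∃ s, s = m * b' + k * d' := ⟨_, rfl⟩
    have hkt : k = -(t * b) := by rw [ht]; linear_combination (-k) * hdet + a * e1
    have hmt : m = t * a := by rw [ht]; linear_combination h1
    have hks : k = s * a' := by rw [hs]; linear_combination (-k) * hdet' - b' * e1'
    have hms : m = -(s * b') := by rw [hs]; linear_combination -h2'
    have hmd : m = t * d := by rw [ht]; linear_combination (-m) * hdet - c * e1
    have hmc : m = -(s * c') := by rw [hs]; linear_combination (-m) * hdet' + d' * e1'
    have ht0 : t ≠ 0 := by rintro rfl; omega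
    have hs0 : s ≠ 0 := by rintro rfl; omega
    have had : a = d := mul_left_cancel₀ ht0 (hmt.symm.trans hmd)
    have hbc : b' = c' := mul_left_cancel₀ hs0 (by linarith)
    subst had hbc
    have hts : t ∣ s := ⟨a * b' - b * d', by rw [hs]; linear_combination b' * hmt + d' * hkt⟩
    have hst : s ∣ t := ⟨-(b' * a) + a' * c, by rw [ht]; linear_combination a * hms + c * hks⟩
    have hsq : t ^ 2 = s ^ 2 := by
      have := Int.natAbs_eq_of_dvd_dvd hts hst
      exact Int.natAbs_eq_iff_sq_eq.mp this
    have hab : a ^ 2 = b' ^ 2 := by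
      apply mul_left_cancel₀ (pow_ne_zero 2 ht0)
      calc t ^ 2 * a ^ 2 = m ^ 2 := by rw [hmt]; ring
        _ = s ^ 2 * b' ^ 2 := by rw [hms]; ring
        _ = t ^ 2 * b' ^ 2 := by rw [hsq]
    have hba : b ^ 2 = a' ^ 2 := by
      apply mul_left_cancel₀ (pow_ne_zero 2 ht0)
      calc t ^ 2 * b ^ 2 = k ^ 2 := by rw [hkt]; ring
        _ = s ^ 2 * a' ^ 2 := by rw [hks]; ring
        _ = t ^ 2 * a' ^ 2 := by rw [hsq]
    have hdv : b ∣ a' := (sq_eq_sq_iff_eq_or_eq_neg.mp hba).elim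
      (fun h => h ▸ dvd_rfl) (fun h => ⟨-1, by rw [h]; ring⟩)
    have hb2 : b ∣ 2 := by
      obtain ⟨q, hq⟩ := hdv
      exact ⟨q * d' - c, by rw [hq] at hdet'; linear_combination -hdet - hdet' + hab⟩
    have hb3 : b = 1 ∨ b = -1 ∨ b = 2 ∨ b = -2 := by
      have u1 := Int.le_of_dvd (by norm_num) hb2
      have u2 := Int.le_of_dvd (by norm_num) ((neg_dvd).mpr hb2)
      omega
    have key := key_aux m k hm hk
    rcases hb3 with rfl | rfl | rfl | rfl
    · exact key (-t) (-a) (by omega) (by rw [hmt]; ring) (by omega)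
    · exact key t a (by omega) hmt (by omega)
    · exact key (-t) (-a) (by omega) (by rw [hmt]; ring) (by omega)
    · exact key t a (by omega) hmt (by omega)
  · rintro (rfl | ⟨-, rfl⟩)
    · refine ⟨⟨0, 1, -1, 0, by norm_num, ?_⟩, ⟨1, 0, 0, 1, by norm_num, ?_⟩⟩ <;>
        intro x y <;> simp only [qval, conjF, adjF] <;> ring
    · refine ⟨⟨1, -2, 0, 1, by norm_num, ?_⟩, ⟨2, -1, -1, 1, by norm_num, ?_⟩⟩ <;>
        intro x y <;> simp only [qval, conjF, adjF] <;> ring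
end

section
/- Let k be a positive integer and m an integer with 0≤m<k. The class of the form (m,0,k) is never antisymmetric; that is, if (m,0,k) is SL(2,ℤ)-equivalent to its antipodal form (0,−m,−k), then it is also SL(2,ℤ)-equivalent to its conjugate (m,0,−k) and to its adjoint (0,−m,k). -/
/-- For `0 ≤ m < k`, the class of `(m,0,k)` cannot be antisymmetric: if `(m,0,k)` is
equivalent to its antipodal, then it is also equivalent to its conjugate and to its
adjoint. -/
theorem statement17 (m k : ℤ) (hm : 0 ≤ m) (hk : m < k) (hkpos : 0 < k)
    (hant : SLEquiv (m, 0, k) (antipF (m, 0, k))) :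
    SLEquiv (m, 0, k) (conjF (m, 0, k)) ∧ SLEquiv (m, 0, k) (adjF (m, 0, k)) := by
  obtain ⟨a, b, c, d, hdet, h⟩ := hant
  have h10 := h 1 0
  have h01 := h 0 1
  have h11 := h 1 1
  simp only [qval, antipF] at h10 h01 h11
  have hx : a * (m * a + k * c) = 0 := by linear_combination -h10
  have hy : b * (m * b + k * d) = -m := by linear_combination -h01
  have hxy : 2 * m * a * b + k * (a * d + b * c) = -k := by
    linear_combination h10 + h01 - h11
  have ha : a = 0 := by
    rcases mul_eq_zero.mp hx with h0 | h0
    · exact h0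
    · have : k = -k := by linear_combination hxy - 2 * b * h0 - k * hdet
      omega
  subst ha
  have hbu : IsUnit b := IsUnit.of_mul_eq_one (-c) (by linear_combination hdet)
  have hcase : m = 0 ∨ k = 2 * m := by
    have hdvd : ∃ e : ℤ, 2 * m = k * e := by
      rcases Int.isUnit_iff.mp hbu with hb | hb
      · exact ⟨-d, by subst hb; linear_combination hy⟩
      · exact ⟨d, by subst hb; linear_combination hy⟩
    obtain ⟨e, he⟩ := hdvd
    have h1 : 0 ≤ e := by nlinarith
    have h2 : e < 2 := by nlinarith
    interval_cases e <;> omega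
  rcases hcase with h0 | h0
  · subst h0
    exact ⟨⟨0, 1, -1, 0, by norm_num, fun x y => by simp only [qval, conjF]; ring⟩,
      ⟨1, 0, 0, 1, by norm_num, fun x y => by simp only [qval, adjF]; ring⟩⟩
  · subst h0
    exact ⟨⟨1, -2, 0, 1, by norm_num, fun x y => by simp only [qval, conjF]; ring⟩,
      ⟨2, -1, -1, 1, by norm_num, fun x y => by simp only [qval, adjF]; ring⟩⟩
end

section
/- Let h=(m,n,k) be a reduced integer binary quadratic form (m>0, n>0, k<0, m+n<−k) with discriminant Δ=k²−4mn>0 not a perfect square. Then the minus continued fraction expansion of ξ⁺(h)=(−k+√Δ)/(2m) is purely periodic; if (c_1,…,c_t) denotes its period, then the number of reduced forms in the SL(2,ℤ)-equivalence class of h is exactly t, and the values ξ⁺(h') as h' ranges over the reduced forms of the class are exactly the numbers whose minus continued fraction is purely periodic with period a cyclic permutation of (c_1,…,c_t). -/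
/-- Iterates of the map underlying the minus (modular) continued fraction. -/
noncomputable def minusIter (ξ : ℝ) : ℕ → ℝ
  | 0 => ξ
  | n + 1 => 1 / ((⌈minusIter ξ n⌉ : ℝ) - minusIter ξ n)

/-- The `n`-th partial quotient of the minus (modular) continued fraction of `ξ`,
so that `ξ = b₀ - 1/(b₁ - 1/(b₂ - ⋯))`. -/
noncomputable def mcfTerm (ξ : ℝ) (n : ℕ) : ℤ := ⌈minusIter ξ n⌉

/-- `s` is the period of the purely periodic minus continued fraction expansion of `ξ`. -/
def IsPurelyPeriodicMCF (s : List ℤ) (ξ : ℝ) : Prop :=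
  s ≠ [] ∧
  (∀ j : ℕ, mcfTerm ξ j = s.getD (j % s.length) 0) ∧
  (∀ P : ℕ, 1 ≤ P → (∀ j : ℕ, mcfTerm ξ (j + P) = mcfTerm ξ j) → s.length ≤ P)

/-- A form `(m, n, k)` is reduced iff `m > 0`, `n > 0`, `k < 0` and `m + n < -k`. -/
def ReducedForm (f : ℤ × ℤ × ℤ) : Prop :=
  0 < f.1 ∧ 0 < f.2.1 ∧ f.2.2 < 0 ∧ f.1 + f.2.1 < -f.2.2

/-! ### Auxiliary material -/

/-- One step of the reduction cycle. -/
noncomputable def stepF (f : ℤ × ℤ × ℤ) : ℤ × ℤ × ℤ :=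
  (f.1 * ⌈xiPlus f⌉ ^ 2 + f.2.2 * ⌈xiPlus f⌉ + f.2.1, f.1, -(2 * f.1 * ⌈xiPlus f⌉) - f.2.2)

/-- Reduced forms of discriminant `D`. -/
def GoodF (D : ℤ) (f : ℤ × ℤ × ℤ) : Prop := ReducedForm f ∧ formDisc f = D

lemma sqrt_irr {D : ℤ} (hD : 0 < D) (hsq : ¬ IsSquare D) : Irrational (Real.sqrt (D : ℝ)) :=
  (irrational_sqrt_intCast_iff_of_nonneg hD.le).2 hsq

lemma xi_lin {D : ℤ} {f : ℤ × ℤ × ℤ} (hf : GoodF D f) :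
    2 * (f.1 : ℝ) * xiPlus f = -(f.2.2 : ℝ) + Real.sqrt (D : ℝ) := by
  obtain ⟨⟨h1, -⟩, h2⟩ := hf
  have : (f.1 : ℝ) ≠ 0 := by exact_mod_cast h1.ne'
  unfold xiPlus
  rw [h2]
  field_simp

lemma disc_real {D : ℤ} {f : ℤ × ℤ × ℤ} (hf : GoodF D f) :
    (D : ℝ) = (f.2.2 : ℝ) ^ 2 - 4 * f.1 * f.2.1 := by
  rw [← hf.2]; unfold formDisc; push_cast; ring

lemma xi_factor {D : ℤ} (hD : 0 < D) {f : ℤ × ℤ × ℤ} (hf : GoodF D f) (t : ℝ) :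
    (f.1 : ℝ) * t ^ 2 + f.2.2 * t + f.2.1
      = (t - xiPlus f) * (f.1 * (t - xiPlus f) + Real.sqrt (D : ℝ)) := by
  have h := xi_lin hf
  have hd := disc_real hf
  have hs : Real.sqrt (D : ℝ) ^ 2 = D := Real.sq_sqrt (by exact_mod_cast hD.le)
  have h0 : (0 : ℝ) < f.1 := by exact_mod_cast hf.1.1
  set s := Real.sqrt (D : ℝ)
  set x := xiPlus f
  have hk : (f.2.2 : ℝ) = s - 2 * f.1 * x := by linarith
  have hn : (f.1 : ℝ) * f.2.1 = f.1 * (x * (f.1 * x - s)) := by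
    rw [hk] at hd
    nlinarith
  have hn' := mul_left_cancel₀ h0.ne' hn
  rw [hn', hk]; ring

lemma sqrtD_pos {D : ℤ} (hD : 0 < D) : 0 < Real.sqrt (D : ℝ) :=
  Real.sqrt_pos.2 (by exact_mod_cast hD)

lemma xi_irr {D : ℤ} (hD : 0 < D) (hsq : ¬ IsSquare D) {f : ℤ × ℤ × ℤ} (hf : GoodF D f) :
    Irrational (xiPlus f) := by
  have h := xi_lin hf
  intro ⟨q, hq⟩
  apply sqrt_irr hD hsq
  refine ⟨2 * f.1 * q + f.2.2, ?_⟩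
  push_cast
  rw [hq]; linarith

lemma xi_gt_one {D : ℤ} (hD : 0 < D) {f : ℤ × ℤ × ℤ} (hf : GoodF D f) : 1 < xiPlus f := by
  by_contra hle
  push Not at hle
  have h := xi_factor hD hf 1
  have hs := sqrtD_pos hD
  have h0 : (0 : ℝ) < f.1 := by exact_mod_cast hf.1.1
  have h1 : (f.1 : ℝ) + f.2.1 + f.2.2 < 0 := by
    have := hf.1.2.2.2
    have : f.1 + f.2.1 + f.2.2 < 0 := by linarith
    exact_mod_cast this
  have h2 : 0 ≤ (1 - xiPlus f) * (f.1 * (1 - xiPlus f) + Real.sqrt (D : ℝ)) := by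
    have : 0 ≤ 1 - xiPlus f := by linarith
    positivity
  nlinarith

lemma ceil_facts {x : ℝ} (hx : Irrational x) : x < ⌈x⌉ ∧ (⌈x⌉ : ℝ) - 1 < x := by
  refine ⟨lt_of_le_of_ne (Int.le_ceil x) ?_, by linarith [Int.ceil_lt_add_one x]⟩
  exact hx.ne_int _

lemma ceil_ge_two {x : ℝ} (hx : 1 < x) : 2 ≤ ⌈x⌉ := by
  have : 1 < ⌈x⌉ := Int.lt_ceil.2 (by exact_mod_cast hx)
  omega

lemma step_good {D : ℤ} (hD : 0 < D) (hsq : ¬ IsSquare D) {f : ℤ × ℤ × ℤ} (hf : GoodF D f) :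
    GoodF D (stepF f) := by
  obtain ⟨hb1, hb2⟩ := ceil_facts (xi_irr hD hsq hf)
  have hx1 := xi_gt_one hD hf
  have hb := ceil_ge_two hx1
  have hs := sqrtD_pos hD
  have h0 : (0 : ℝ) < f.1 := by exact_mod_cast hf.1.1
  have hl := xi_lin hf
  have F := xi_factor hD hf
  set b := ⌈xiPlus f⌉ with hbdef
  set x := xiPlus f with hx
  have hbR : (2 : ℝ) ≤ b := by exact_mod_cast hb
  have A : (0 : ℝ) < (f.1 : ℝ) * b ^ 2 + f.2.2 * b + f.2.1 := by
    rw [F]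
    have : 0 < (b : ℝ) - x := by linarith
    positivity
  have A' : 0 < f.1 * b ^ 2 + f.2.2 * b + f.2.1 := by exact_mod_cast A
  have E1 : (0 : ℝ) < f.1 * (1 - x) + Real.sqrt (D : ℝ) := by
    have h := F 1
    have h1 : (f.1 : ℝ) + f.2.1 + f.2.2 < 0 := by
      have := hf.1.2.2.2
      have : f.1 + f.2.1 + f.2.2 < 0 := by linarith
      exact_mod_cast this
    by_contra hc
    push Not at hc
    have : 0 ≤ (x - 1) * -(f.1 * (1 - x) + Real.sqrt (D : ℝ)) :=
      mul_nonneg (by linarith) (by linarith)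
    nlinarith
  have B : (f.1 : ℝ) * ((b : ℝ) - 1) ^ 2 + f.2.2 * ((b : ℝ) - 1) + f.2.1 < 0 := by
    rw [F]
    apply mul_neg_of_neg_of_pos (by linarith)
    have : (f.1 : ℝ) * (1 - x) ≤ f.1 * ((b : ℝ) - 1 - x) :=
      mul_le_mul_of_nonneg_left (by linarith) h0.le
    linarith
  have B' : f.1 * (b - 1) ^ 2 + f.2.2 * (b - 1) + f.2.1 < 0 := by exact_mod_cast B
  have C : (0 : ℝ) < 2 * f.1 * b + f.2.2 := by nlinarith
  have C' : 0 < 2 * f.1 * b + f.2.2 := by exact_mod_cast C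
  have hfd := hf.2
  refine ⟨⟨A', hf.1.1, ?_, ?_⟩, ?_⟩
  · show -(2 * f.1 * b) - f.2.2 < 0
    linarith
  · show f.1 * b ^ 2 + f.2.2 * b + f.2.1 + f.1 < - (-(2 * f.1 * b) - f.2.2)
    linarith
  · unfold formDisc at hfd ⊢
    show (-(2 * f.1 * b) - f.2.2) ^ 2 - 4 * (f.1 * b ^ 2 + f.2.2 * b + f.2.1) * f.1 = D
    rw [← hfd]; ring

lemma step_xi {D : ℤ} (hD : 0 < D) (hsq : ¬ IsSquare D) {f : ℤ × ℤ × ℤ} (hf : GoodF D f) :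
    xiPlus (stepF f) = 1 / ((⌈xiPlus f⌉ : ℝ) - xiPlus f) := by
  obtain ⟨hb1, hb2⟩ := ceil_facts (xi_irr hD hsq hf)
  have hl := xi_lin hf
  have F := xi_factor hD hf (⌈xiPlus f⌉ : ℝ)
  have G := step_good hD hsq hf
  have hl' := xi_lin G
  have hg : (0 : ℝ) < ((stepF f).1 : ℝ) := by exact_mod_cast G.1.1
  have e1 : ((stepF f).1 : ℝ) = f.1 * (⌈xiPlus f⌉ : ℝ) ^ 2 + f.2.2 * ⌈xiPlus f⌉ + f.2.1 := by
    unfold stepF; push_cast; ring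
  have e3 : ((stepF f).2.2 : ℝ) = -(2 * f.1 * (⌈xiPlus f⌉ : ℝ)) - f.2.2 := by
    unfold stepF; push_cast; ring
  rw [e3] at hl'
  rw [eq_div_iff (by linarith)]
  apply mul_left_cancel₀ (mul_pos two_pos hg).ne'
  rw [← mul_assoc, hl', e1, F]
  have : (f.2.2 : ℝ) = Real.sqrt (D : ℝ) - 2 * f.1 * xiPlus f := by linarith
  rw [this]; ring

lemma convex_aux {m K M b e : ℤ} (hm : 0 < m) (h1 : m + K + M < 0)
    (he : m * e ^ 2 + K * e + M < 0) (hb1 : 1 ≤ b) (hbe : b ≤ e) :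
    m * b ^ 2 + K * b + M < 0 := by
  rcases hb1.eq_or_lt with rfl | hb1
  · linarith
  have e1 : (e - 1) * (m * b ^ 2 + K * b + M) = (e - b) * (m + K + M)
      + (b - 1) * (m * e ^ 2 + K * e + M) - m * (e - b) * (b - 1) * (e - 1) := by ring
  have t1 : (e - b) * (m + K + M) ≤ 0 :=
    mul_nonpos_of_nonneg_of_nonpos (by omega) h1.le
  have t2 : (b - 1) * (m * e ^ 2 + K * e + M) < 0 :=
    mul_neg_of_pos_of_neg (by omega) he
  have t3 : 0 ≤ m * (e - b) * (b - 1) * (e - 1) :=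
    mul_nonneg (mul_nonneg (mul_nonneg hm.le (by omega)) (by omega)) (by omega)
  by_contra hc
  push Not at hc
  have : 0 ≤ (e - 1) * (m * b ^ 2 + K * b + M) := mul_nonneg (by omega) hc
  linarith

lemma step_inj {D : ℤ} (hD : 0 < D) (hsq : ¬ IsSquare D) {f g : ℤ × ℤ × ℤ}
    (hf : GoodF D f) (hg : GoodF D g) (h : stepF f = stepF g) : f = g := by
  have Gf := step_good hD hsq hf
  have hbf := ceil_ge_two (xi_gt_one hD hf)
  have hbg := ceil_ge_two (xi_gt_one hD hg)
  obtain ⟨m, n, k⟩ := f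
  obtain ⟨m', n', k'⟩ := g
  obtain ⟨⟨-, -, -, r4⟩, -⟩ := Gf
  obtain ⟨⟨p1, p2, p3, p4⟩, -⟩ := hf
  obtain ⟨⟨q1, q2, q3, q4⟩, -⟩ := hg
  unfold stepF at h r4
  simp only [Prod.mk.injEq] at h p1 p2 p3 p4 q1 q2 q3 q4 r4 hbf hbg
  generalize ⌈xiPlus (m, n, k)⌉ = b at *
  generalize ⌈xiPlus (m', n', k')⌉ = c at *
  obtain ⟨h1, h2, h3⟩ := h
  subst h2
  have key : b = c := by
    have hk : k = -(2 * m * b) - (-(2 * m * b) - k) := by ring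
    have hn : n = (m * b ^ 2 + k * b + n) - m * b ^ 2 - k * b := by ring
    generalize m * b ^ 2 + k * b + n = M at *
    generalize -(2 * m * b) - k = K at *
    have hk' : k' = -(2 * m * c) - K := by linarith
    have hn' : n' = M - m * c ^ 2 - k' * c := by linarith
    subst hk'
    subst hk
    have b1 : 0 < m * b ^ 2 + K * b + M := by nlinarith
    have b2 : m * (b - 1) ^ 2 + K * (b - 1) + M < 0 := by nlinarith
    have c1 : 0 < m * c ^ 2 + K * c + M := by nlinarith
    have c2 : m * (c - 1) ^ 2 + K * (c - 1) + M < 0 := by nlinarith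
    rcases lt_trichotomy b c with hlt | heq | hgt
    · exact absurd b1 (not_lt.2 (convex_aux p1 (by linarith) c2 (by omega) (by omega)).le)
    · exact heq
    · exact absurd c1 (not_lt.2 (convex_aux p1 (by linarith) b2 (by omega) (by omega)).le)
  subst key
  have hk : k' = k := by linarith
  subst hk
  have : n = n' := by linarith
  subst this
  rfl

lemma good_finite (D : ℤ) : {f : ℤ × ℤ × ℤ | GoodF D f}.Finite := by
  apply Set.Finite.subset (Set.Finite.prod (Set.finite_Icc (0 : ℤ) D)
    (Set.Finite.prod (Set.finite_Icc (0 : ℤ) D) (Set.finite_Icc (-(D + 4 * D * D)) (0 : ℤ))))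
  rintro ⟨m, n, k⟩ ⟨⟨h1, h2, h3, h4⟩, h5⟩
  unfold formDisc at h5
  simp only at h1 h2 h3 h4 h5
  have a1 : (m + n + 1) ^ 2 ≤ k ^ 2 := by nlinarith
  have a2 : m + n ≤ D := by nlinarith [sq_nonneg (m - n)]
  have a3 : m * n ≤ D * D := mul_le_mul (by linarith) (by linarith) h2.le (by linarith)
  have a4 : -k ≤ k ^ 2 := by nlinarith
  simp only [Set.mem_prod, Set.mem_Icc]
  refine ⟨⟨by linarith, by linarith⟩, ⟨by linarith, by linarith⟩, by linarith, by linarith⟩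

lemma xi_inj {D : ℤ} (hD : 0 < D) (hsq : ¬ IsSquare D) {f g : ℤ × ℤ × ℤ}
    (hf : GoodF D f) (hg : GoodF D g) (h : xiPlus f = xiPlus g) : f = g := by
  have l1 := xi_lin hf
  have l2 := xi_lin hg
  have hirr := sqrt_irr hD hsq
  rw [h] at l1
  have h1 : f.1 = g.1 := by
    by_contra hne
    have hne' : ((f.1 : ℝ) - g.1) ≠ 0 := by
      rw [sub_ne_zero]; exact_mod_cast hne
    apply xi_irr hD hsq hg
    refine ⟨((g.2.2 - f.2.2 : ℤ) : ℚ) / ((2 * (f.1 - g.1) : ℤ) : ℚ), ?_⟩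
    push_cast
    rw [div_eq_iff (by positivity)]
    linarith
  have h3 : f.2.2 = g.2.2 := by
    rw [h1] at l1
    have : (f.2.2 : ℝ) = g.2.2 := by linarith
    exact_mod_cast this
  have d1 := hf.2
  have d2 := hg.2
  unfold formDisc at d1 d2
  have h0 := hg.1.1
  have h2 : f.2.1 = g.2.1 := by
    rw [h1, h3] at d1
    have : g.1 * f.2.1 = g.1 * g.2.1 := by linarith
    exact mul_left_cancel₀ h0.ne' this
  exact Prod.ext h1 (Prod.ext h2 h3)

lemma iter_good {D : ℤ} (hD : 0 < D) (hsq : ¬ IsSquare D) {f : ℤ × ℤ × ℤ} (hf : GoodF D f)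
    (j : ℕ) : GoodF D (stepF^[j] f) := by
  induction j with
  | zero => exact hf
  | succ j ih => rw [Function.iterate_succ_apply']; exact step_good hD hsq ih

lemma iter_xi {D : ℤ} (hD : 0 < D) (hsq : ¬ IsSquare D) {f : ℤ × ℤ × ℤ} (hf : GoodF D f)
    (j : ℕ) : minusIter (xiPlus f) j = xiPlus (stepF^[j] f) := by
  induction j with
  | zero => rfl
  | succ j ih =>
    rw [Function.iterate_succ_apply', step_xi hD hsq (iter_good hD hsq hf j), ← ih]
    rfl

lemma minusIter_add (x : ℝ) (i j : ℕ) : minusIter x (i + j) = minusIter (minusIter x i) j := by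
  induction j with
  | zero => rfl
  | succ j ih =>
    show 1 / ((⌈minusIter x (i + j)⌉ : ℝ) - minusIter x (i + j)) = _
    rw [ih]; rfl

lemma exists_period {D : ℤ} (hD : 0 < D) (hsq : ¬ IsSquare D) {f : ℤ × ℤ × ℤ}
    (hf : GoodF D f) : ∃ P, 0 < P ∧ stepF^[P] f = f := by
  have canc : ∀ i p, stepF^[i] f = stepF^[i + p] f → f = stepF^[p] f := by
    intro i p
    induction i with
    | zero => intro h; simpa using h
    | succ i ih =>
      intro h
      apply ih
      rw [show i + 1 + p = (i + p) + 1 by ring, Function.iterate_succ_apply',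
        Function.iterate_succ_apply'] at h
      exact step_inj hD hsq (iter_good hD hsq hf _) (iter_good hD hsq hf _) h
  have hfin : Finite {f : ℤ × ℤ × ℤ | GoodF D f} := good_finite D
  obtain ⟨i, j, hij, he⟩ := Finite.exists_ne_map_eq_of_infinite
    (fun i : ℕ => (⟨stepF^[i] f, iter_good hD hsq hf i⟩ : {f : ℤ × ℤ × ℤ | GoodF D f}))
  simp only [Subtype.mk.injEq] at he
  rcases lt_or_gt_of_ne hij with h | h
  · obtain ⟨p, rfl⟩ := Nat.exists_eq_add_of_lt h
    exact ⟨p + 1, by omega, (canc i (p + 1) he).symm⟩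
  · obtain ⟨p, rfl⟩ := Nat.exists_eq_add_of_lt h
    exact ⟨p + 1, by omega, (canc j (p + 1) he.symm).symm⟩

/-- A number is determined by its minus continued fraction. -/
lemma mcf_unique {D : ℤ} (hD : 0 < D) (hsq : ¬ IsSquare D) {f : ℤ × ℤ × ℤ} (hf : GoodF D f)
    {x : ℝ} (h : ∀ j, mcfTerm x j = mcfTerm (xiPlus f) j) : x = xiPlus f := by
  obtain ⟨g, hg, hmin⟩ := Set.exists_min_image _ xiPlus (good_finite D) ⟨f, hf⟩
  have hr := xi_gt_one hD hg
  set r := xiPlus g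
  have hy : ∀ j, r ≤ minusIter (xiPlus f) j := by
    intro j
    rw [iter_xi hD hsq hf]
    exact hmin _ (iter_good hD hsq hf j)
  have hx : ∀ j, 1 < minusIter x j := by
    intro j
    have h1 := h j
    have h2 := ceil_ge_two (lt_of_lt_of_le hr (hy j))
    unfold mcfTerm at h1
    rw [← h1] at h2
    have : (1 : ℤ) < ⌈minusIter x j⌉ := by omega
    have := Int.lt_ceil.1 this
    exact_mod_cast this
  have hrec : ∀ z : ℝ, (∀ j, 1 < minusIter z j) → ∀ j,
      minusIter z j = mcfTerm z j - 1 / minusIter z (j + 1) := by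
    intro z _ j
    show minusIter z j
      = (⌈minusIter z j⌉ : ℝ) - 1 / (1 / ((⌈minusIter z j⌉ : ℝ) - minusIter z j))
    rw [one_div_one_div]; ring
  have growth : ∀ j, |x - xiPlus f| * r ^ j ≤ |minusIter x j - minusIter (xiPlus f) j| := by
    intro j
    induction j with
    | zero => simp [minusIter]
    | succ j ih =>
      have e1 := hrec x hx j
      have e2 := hrec (xiPlus f) (fun j => lt_of_lt_of_le hr (hy j)) j
      rw [h j] at e1
      have p1 := hx (j + 1)
      have p2 := hy (j + 1)
      set u := minusIter x (j + 1)
      set v := minusIter (xiPlus f) (j + 1)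
      have hu : 0 < u := by linarith
      have hv : 0 < v := by linarith
      have e3 : u - v = (minusIter x j - minusIter (xiPlus f) j) * (u * v) := by
        rw [e1, e2]; field_simp; ring
      rw [e3, abs_mul, abs_of_pos (mul_pos hu hv), pow_succ, ← mul_assoc]
      apply mul_le_mul ih _ (by linarith) (abs_nonneg _)
      nlinarith
  by_contra hne
  have hpos : 0 < |x - xiPlus f| := abs_pos.2 (sub_ne_zero.2 hne)
  obtain ⟨j, hj⟩ := pow_unbounded_of_one_lt (1 / |x - xiPlus f|) hr
  have g1 := growth j
  have g2 : |minusIter x j - minusIter (xiPlus f) j| < 1 := by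
    have h1 := h j
    unfold mcfTerm at h1
    have a1 := Int.le_ceil (minusIter x j)
    have a2 := Int.ceil_lt_add_one (minusIter x j)
    have a3 := Int.le_ceil (minusIter (xiPlus f) j)
    have a4 := Int.ceil_lt_add_one (minusIter (xiPlus f) j)
    rw [h1] at a1 a2
    rw [abs_lt]
    constructor <;> linarith
  rw [div_lt_iff₀ hpos] at hj
  linarith

/-- Having a common tail. -/
def TailEq (x y : ℝ) : Prop := ∃ i j, minusIter x i = minusIter y j

lemma TailEq.symm {x y : ℝ} : TailEq x y → TailEq y x := fun ⟨i, j, h⟩ => ⟨j, i, h.symm⟩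

lemma TailEq.refl (x : ℝ) : TailEq x x := ⟨0, 0, rfl⟩

lemma TailEq.trans {x y z : ℝ} : TailEq x y → TailEq y z → TailEq x z := by
  rintro ⟨i, j, h⟩ ⟨k, l, h'⟩
  refine ⟨i + k, l + j, ?_⟩
  rw [minusIter_add, minusIter_add, h, ← h', ← minusIter_add, ← minusIter_add, add_comm]

lemma tail_add_int (x : ℝ) (n : ℤ) : TailEq (x + n) x := by
  refine ⟨1, 1, ?_⟩
  show 1 / ((⌈x + n⌉ : ℝ) - (x + n)) = 1 / ((⌈x⌉ : ℝ) - x)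
  rw [Int.ceil_add_intCast]
  push_cast
  congr 1; ring

lemma tail_S_gt_one {x : ℝ} (hx : 1 < x) : TailEq (-(1 / x)) x := by
  refine ⟨1, 0, ?_⟩
  show 1 / ((⌈-(1 / x)⌉ : ℝ) - (-(1 / x))) = x
  have : ⌈-(1 / x)⌉ = 0 := by
    rw [Int.ceil_eq_zero_iff]
    have h1 : 0 < 1 / x := by positivity
    have h2 : 1 / x < 1 := by rw [div_lt_one (by linarith)]; exact hx
    constructor <;> linarith
  rw [this]
  simp

lemma tail_S_pos_aux (N : ℕ) : ∀ x : ℝ, Irrational x → 0 < x → 1 / x < N + 1 →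
    TailEq (-(1 / x)) x := by
  induction N with
  | zero =>
    intro x _ h0 h1
    apply tail_S_gt_one
    rw [div_lt_iff₀ h0] at h1
    simpa using h1
  | succ N ih =>
    intro x hx h0 h1
    rcases lt_trichotomy x 1 with hlt | heq | hgt
    · have hz : 0 < 1 - x := by linarith
      have hz' : Irrational (1 - x) := by simpa using hx.intCast_sub 1
      have w_irr : Irrational (1 / (1 - x) - 1) := by
        have : Irrational (1 - x)⁻¹ := hz'.inv
        simpa using this.sub_intCast 1
      have we : 1 / (1 - x) - 1 = x / (1 - x) := by field_simp; ring
      have w0 : 0 < 1 / (1 - x) - 1 := by rw [we]; positivity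
      have winv : 1 / (1 / (1 - x) - 1) = 1 / x - 1 := by rw [we]; field_simp
      have key := ih (1 / (1 - x) - 1) w_irr w0 (by rw [winv]; push_cast at h1; linarith)
      rw [winv] at key
      have t1 : TailEq (-(1 / x)) (-(1 / x - 1)) := by
        have := (tail_add_int (-(1 / x)) 1).symm
        convert this using 1
        push_cast; ring
      have t2 : TailEq (1 / (1 - x) - 1) (1 / (1 - x)) := by
        have := tail_add_int (1 / (1 - x)) (-1)
        convert this using 1
        push_cast; ring
      have t3 : TailEq (1 / (1 - x)) x := by
        refine ⟨0, 1, ?_⟩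
        show 1 / (1 - x) = 1 / ((⌈x⌉ : ℝ) - x)
        have : ⌈x⌉ = 1 := by
          rw [Int.ceil_eq_iff]; push_cast; constructor <;> linarith
        rw [this]; simp
      exact t1.trans (key.trans (t2.trans t3))
    · exact absurd heq hx.ne_one
    · exact tail_S_gt_one hgt

lemma tail_S {x : ℝ} (hx : Irrational x) : TailEq (-(1 / x)) x := by
  have pos : ∀ y : ℝ, Irrational y → 0 < y → TailEq (-(1 / y)) y := by
    intro y hy h0
    obtain ⟨N, hN⟩ := exists_nat_gt (1 / y)
    exact tail_S_pos_aux N y hy h0 (by linarith)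
  rcases lt_or_gt_of_ne hx.ne_zero with h | h
  · have h1 : Irrational (-(1 / x)) := by rw [one_div]; exact hx.inv.neg
    have h2 : 0 < -(1 / x) := by
      have := one_div_neg.2 h
      linarith
    have := pos _ h1 h2
    have e : -(1 / (-(1 / x))) = x := by rw [one_div_neg_eq_neg_one_div, one_div_one_div]; simp
    rw [e] at this
    exact this.symm
  · exact pos x hx h

lemma mob_den_ne {x : ℝ} (hx : Irrational x) {c d : ℤ} (h : c ≠ 0 ∨ d ≠ 0) :
    (c : ℝ) * x + d ≠ 0 := by
  intro he
  by_cases hc : c = 0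
  · subst hc
    rcases h with h | h
    · exact h rfl
    · simp at he; exact h he
  · have : Irrational ((c : ℝ) * x + d) := (hx.intCast_mul hc).add_intCast d
    exact this.ne_zero he

lemma mob_irr {x : ℝ} (hx : Irrational x) {a b c d : ℤ} (hdet : a * d - b * c = 1) :
    Irrational (((a : ℝ) * x + b) / (c * x + d)) := by
  rintro ⟨q, hq⟩
  have hden : (c : ℝ) * x + d ≠ 0 := mob_den_ne hx (by
    by_contra hc; push Not at hc; obtain ⟨rfl, rfl⟩ := hc; simp at hdet)
  rw [eq_div_iff hden] at hq
  have hdR : (a : ℝ) * d - b * c = 1 := by exact_mod_cast hdet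
  have h1 : ((q : ℝ) * c - a) * x = b - q * d := by linarith
  by_cases h0 : (q : ℝ) * c - a = 0
  · rw [h0] at h1
    have h2 : (b : ℝ) = q * d := by linarith
    have h3 : (a : ℝ) = q * c := by linarith
    rw [h2, h3] at hdR
    ring_nf at hdR
    norm_num at hdR
  · apply hx
    refine ⟨(b - q * d) / (q * c - a), ?_⟩
    push_cast
    rw [div_eq_iff h0, ← h1]; ring

lemma tail_mob (N : ℕ) : ∀ (x : ℝ), Irrational x → ∀ a b c d : ℤ, a * d - b * c = 1 →
    c.natAbs ≤ N → TailEq (((a : ℝ) * x + b) / (c * x + d)) x := by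
  induction N with
  | zero =>
    intro x hx a b c d hdet hc
    have hc0 : c = 0 := by omega
    subst hc0
    have had : a * d = 1 := by linarith
    rcases Int.mul_eq_one_iff_eq_one_or_neg_one.1 had with ⟨rfl, rfl⟩ | ⟨rfl, rfl⟩
    · have := tail_add_int x b
      simpa using this
    · have := tail_add_int x (-b)
      convert this using 1
      push_cast; ring
  | succ N ih =>
    intro x hx a b c d hdet hc
    by_cases hc0 : c = 0
    · subst hc0
      exact ih x hx a b 0 d hdet (by simp)
    have hden : (c : ℝ) * x + d ≠ 0 := mob_den_ne hx (Or.inl hc0)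
    have hr1 := Int.emod_nonneg a hc0
    have hr2 := Int.emod_lt_abs a hc0
    have hqr := Int.emod_add_mul_ediv a c
    set q := a / c
    set r := a % c
    have hdet' : r * d - (b - q * d) * c = 1 := by rw [← hdet, ← hqr]; ring
    have irr := mob_irr hx hdet'
    have t1 : TailEq (((a : ℝ) * x + b) / (c * x + d))
        (((r : ℝ) * x + (b - q * d : ℤ)) / (c * x + d)) := by
      have := tail_add_int (((r : ℝ) * x + (b - q * d : ℤ)) / (c * x + d)) q
      convert this using 1
      rw [← hqr]
      push_cast
      field_simp
      ring
    have t2 := (tail_S irr).symm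
    have t3 := ih x hx (-c) (-d) r (b - q * d) (by rw [← hdet']; ring) (by
      have : |c| = (c.natAbs : ℤ) := Int.abs_eq_natAbs c
      omega)
    have e : -(1 / (((r : ℝ) * x + (b - q * d : ℤ)) / (c * x + d)))
        = (((-c : ℤ) : ℝ) * x + (-d : ℤ)) / (r * x + (b - q * d : ℤ)) := by
      rw [one_div_div, ← neg_div]
      push_cast
      congr 1; ring
    rw [e] at t2
    exact t1.trans (t2.trans t3)

lemma equiv_coeffs {f g : ℤ × ℤ × ℤ} {a b c d : ℤ}
    (h : ∀ x y : ℤ, qval g x y = qval f (a * x + b * y) (c * x + d * y)) :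
    g.1 = f.1 * a ^ 2 + f.2.1 * c ^ 2 + f.2.2 * a * c ∧
    g.2.1 = f.1 * b ^ 2 + f.2.1 * d ^ 2 + f.2.2 * b * d ∧
    g.2.2 = 2 * f.1 * a * b + 2 * f.2.1 * c * d + f.2.2 * (a * d + b * c) := by
  have h1 := h 1 0
  have h2 := h 0 1
  have h3 := h 1 1
  unfold qval at h1 h2 h3
  ring_nf at h1 h2 h3
  refine ⟨by linarith, by linarith, by linarith⟩

lemma equiv_disc {f g : ℤ × ℤ × ℤ} (h : SLEquiv f g) : formDisc g = formDisc f := by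
  obtain ⟨a, b, c, d, hdet, h⟩ := h
  obtain ⟨h1, h2, h3⟩ := equiv_coeffs h
  unfold formDisc
  rw [h1, h2, h3]
  have : (a * d - b * c) ^ 2 = 1 := by rw [hdet]; norm_num
  linear_combination (f.2.2 ^ 2 - 4 * f.1 * f.2.1) * this

lemma equiv_tail {D : ℤ} (hD : 0 < D) (hsq : ¬ IsSquare D) {f g : ℤ × ℤ × ℤ}
    (hf : GoodF D f) (hg : GoodF D g) (h : SLEquiv f g) : TailEq (xiPlus g) (xiPlus f) := by
  obtain ⟨a, b, c, d, hdet, h⟩ := h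
  obtain ⟨h1, h2, h3⟩ := equiv_coeffs h
  have irr := xi_irr hD hsq hf
  have hdet' : d * a - (-b) * (-c) = 1 := by rw [← hdet]; ring
  have key := tail_mob (-c).natAbs (xiPlus f) irr d (-b) (-c) a hdet' le_rfl
  have hden : ((-c : ℤ) : ℝ) * xiPlus f + a ≠ 0 := mob_den_ne irr (by
    by_contra hc; push Not at hc
    obtain ⟨h1, rfl⟩ := hc
    have : c = 0 := by omega
    subst this; simp at hdet)
  have e : xiPlus g = ((d : ℝ) * xiPlus f + (-b : ℤ)) / ((-c : ℤ) * xiPlus f + a) := by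
    rw [eq_div_iff hden]
    have l1 := xi_lin hf
    have l2 := xi_lin hg
    have dd := disc_real hf
    have hs : Real.sqrt (D : ℝ) ^ 2 = D := Real.sq_sqrt (by exact_mod_cast hD.le)
    have f0 : (f.1 : ℝ) ≠ 0 := by exact_mod_cast hf.1.1.ne'
    have g0 : (g.1 : ℝ) ≠ 0 := by exact_mod_cast hg.1.1.ne'
    have h1' : (g.1 : ℝ) = f.1 * a ^ 2 + f.2.1 * c ^ 2 + f.2.2 * a * c := by exact_mod_cast h1
    have h3' : (g.2.2 : ℝ) = 2 * f.1 * a * b + 2 * f.2.1 * c * d + f.2.2 * (a * d + b * c) := by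
      exact_mod_cast h3
    have hdR : (a : ℝ) * d - b * c = 1 := by exact_mod_cast hdet
    set s := Real.sqrt (D : ℝ)
    set x := xiPlus f
    set y := xiPlus g
    push_cast
    have main : (2 * (g.1 : ℝ) * y) * (-c * (2 * f.1 * x) + 2 * f.1 * a)
        = 2 * g.1 * (d * (2 * f.1 * x) - 2 * f.1 * b) := by
      rw [l1, l2, h3', h1']
      rw [dd] at hs
      generalize (f.1 : ℝ) = m at *
      generalize (f.2.1 : ℝ) = n at *
      generalize (f.2.2 : ℝ) = k at *
      generalize (a : ℝ) = a at *
      generalize (b : ℝ) = b at *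
      generalize (c : ℝ) = c at *
      generalize (d : ℝ) = d at *
      clear_value s
      linear_combination (-c) * hs + (-(s * (2 * m * a + c * k)) + c * (k ^ 2 - 4 * m * n)) * hdR
    apply mul_left_cancel₀ (mul_ne_zero (mul_ne_zero four_ne_zero f0) g0)
    linarith
  rw [e]
  exact key

lemma equiv_refl (f : ℤ × ℤ × ℤ) : SLEquiv f f :=
  ⟨1, 0, 0, 1, by norm_num, fun x y => by simp⟩

lemma equiv_step {f g : ℤ × ℤ × ℤ} (h : SLEquiv f g) : SLEquiv f (stepF g) := by
  obtain ⟨a, b, c, d, hdet, h⟩ := h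
  set e := ⌈xiPlus g⌉ with he
  refine ⟨a * e + b, -a, c * e + d, -c, by rw [← hdet]; ring, fun x y => ?_⟩
  have : qval (stepF g) x y = qval g (e * x - y) x := by
    unfold qval stepF
    rw [← he]
    ring
  rw [this, h]
  congr 1 <;> ring

lemma equiv_iter (f : ℤ × ℤ × ℤ) (j : ℕ) : SLEquiv f (stepF^[j] f) := by
  induction j with
  | zero => exact equiv_refl f
  | succ j ih => rw [Function.iterate_succ_apply']; exact equiv_step ih

lemma class_iff {D : ℤ} (hD : 0 < D) (hsq : ¬ IsSquare D) {f : ℤ × ℤ × ℤ} (hf : GoodF D f)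
    (g : ℤ × ℤ × ℤ) : (SLEquiv f g ∧ ReducedForm g) ↔ ∃ j, g = stepF^[j] f := by
  constructor
  · rintro ⟨h1, h2⟩
    have hg : GoodF D g := ⟨h2, by rw [equiv_disc h1, hf.2]⟩
    obtain ⟨i, j, hij⟩ := equiv_tail hD hsq hf hg h1
    rw [iter_xi hD hsq hf, iter_xi hD hsq hg] at hij
    have hE := xi_inj hD hsq (iter_good hD hsq hg i) (iter_good hD hsq hf j) hij
    obtain ⟨P, hP, hPg⟩ := exists_period hD hsq hg
    have hq : stepF^[P * i] g = g := by
      rw [Function.iterate_mul]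
      exact Function.iterate_fixed hPg i
    have hle : i ≤ P * i := Nat.le_mul_of_pos_left i hP
    refine ⟨P * i - i + j, ?_⟩
    rw [Function.iterate_add_apply, ← hE, ← Function.iterate_add_apply, Nat.sub_add_cancel hle, hq]
  · rintro ⟨j, rfl⟩
    exact ⟨equiv_iter f j, (iter_good hD hsq hf j).1⟩

lemma period_iff {D : ℤ} (hD : 0 < D) (hsq : ¬ IsSquare D) {f : ℤ × ℤ × ℤ} (hf : GoodF D f)
    (P : ℕ) : (∀ j, mcfTerm (xiPlus f) (j + P) = mcfTerm (xiPlus f) j) ↔ stepF^[P] f = f := by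
  constructor
  · intro h
    have hg := iter_good hD hsq hf P
    apply xi_inj hD hsq hg hf
    apply mcf_unique hD hsq hf
    intro j
    rw [← h j, ← iter_xi hD hsq hf]
    unfold mcfTerm
    rw [← minusIter_add, add_comm]
  · intro h j
    unfold mcfTerm
    rw [iter_xi hD hsq hf, iter_xi hD hsq hf, Function.iterate_add_apply, h]

lemma getD_rotate_mod (s : List ℤ) (hs : s ≠ []) (i j : ℕ) :
    (s.rotate i).getD (j % (s.rotate i).length) 0 = s.getD ((i + j) % s.length) 0 := by
  have hl : 0 < s.length := List.length_pos_iff.2 hs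
  have h1 : j % s.length < s.length := Nat.mod_lt _ hl
  simp only [List.getD_eq_getElem?_getD, List.length_rotate]
  rw [List.getElem?_rotate h1, Nat.mod_add_mod, add_comm]

lemma mcf_shift {D : ℤ} (hD : 0 < D) (hsq : ¬ IsSquare D) {f : ℤ × ℤ × ℤ} (hf : GoodF D f)
    (i j : ℕ) : mcfTerm (xiPlus (stepF^[i] f)) j = mcfTerm (xiPlus f) (i + j) := by
  unfold mcfTerm
  rw [minusIter_add, iter_xi hD hsq hf]

lemma main_aux {D : ℤ} (hD : 0 < D) (hsq : ¬ IsSquare D) {f : ℤ × ℤ × ℤ} (hf : GoodF D f) :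
    (∃ s : List ℤ, IsPurelyPeriodicMCF s (xiPlus f)) ∧
    ∀ s : List ℤ, IsPurelyPeriodicMCF s (xiPlus f) →
      ({g : ℤ × ℤ × ℤ | SLEquiv f g ∧ ReducedForm g}.ncard = s.length ∧
       {x : ℝ | ∃ g : ℤ × ℤ × ℤ, SLEquiv f g ∧ ReducedForm g ∧ x = xiPlus g}
          = {x : ℝ | ∃ s' : List ℤ, List.IsRotated s s' ∧ IsPurelyPeriodicMCF s' x}) := by
  obtain ⟨P0, hP0, hP0f⟩ := exists_period hD hsq hf
  have hmem : f ∈ Function.periodicPts stepF := ⟨P0, hP0, hP0f⟩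
  set T := Function.minimalPeriod stepF f with hT
  have hTpos : 0 < T := Function.minimalPeriod_pos_of_mem_periodicPts hmem
  have hTf : stepF^[T] f = f := Function.isPeriodicPt_minimalPeriod stepF f
  have hTmin : ∀ P, 1 ≤ P → stepF^[P] f = f → T ≤ P :=
    fun P h1 h2 => Function.IsPeriodicPt.minimalPeriod_le h1 h2
  have hmod : ∀ j, stepF^[j % T] f = stepF^[j] f := fun j =>
    Function.iterate_mod_minimalPeriod_eq
  constructor
  · refine ⟨(List.range T).map (mcfTerm (xiPlus f)), ?_, ?_, ?_⟩
    · intro h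
      have := congrArg List.length h
      simp at this
      omega
    · intro j
      have : j % T < T := Nat.mod_lt _ hTpos
      simp [List.getD_eq_getElem?_getD, this]
      unfold mcfTerm
      rw [iter_xi hD hsq hf, iter_xi hD hsq hf, hmod]
    · intro P h1 h2
      simpa using hTmin P h1 ((period_iff hD hsq hf P).1 h2)
  · rintro s ⟨hs0, hs1, hs2⟩
    have hslen : 0 < s.length := List.length_pos_iff.2 hs0
    have hsp : ∀ j, mcfTerm (xiPlus f) (j + s.length) = mcfTerm (xiPlus f) j := by
      intro j
      rw [hs1, hs1, Nat.add_mod_right]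
    have hsf : stepF^[s.length] f = f := (period_iff hD hsq hf _).1 hsp
    have hlen : s.length = T :=
      le_antisymm (hs2 T hTpos ((period_iff hD hsq hf T).2 hTf)) (hTmin _ hslen hsf)
    refine ⟨?_, ?_⟩
    · have : {g : ℤ × ℤ × ℤ | SLEquiv f g ∧ ReducedForm g} =
          Set.image (fun j => stepF^[j] f) (Set.Iio T) := by
        ext g
        rw [Set.mem_ofPred_eq, class_iff hD hsq hf]
        constructor
        · rintro ⟨j, rfl⟩
          exact ⟨j % T, Nat.mod_lt _ hTpos, hmod j⟩
        · rintro ⟨j, -, rfl⟩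
          exact ⟨j, rfl⟩
      rw [this, Set.InjOn.ncard_image Function.iterate_injOn_Iio_minimalPeriod, hlen]
      simp [Set.ncard_eq_toFinset_card', hT]
    · ext x
      constructor
      · rintro ⟨g, h1, h2, rfl⟩
        obtain ⟨i, rfl⟩ := (class_iff hD hsq hf g).1 ⟨h1, h2⟩
        have hg := iter_good hD hsq hf i
        refine ⟨s.rotate i, ⟨i, rfl⟩, ?_, ?_, ?_⟩
        · simpa using hs0
        · intro j
          rw [getD_rotate_mod s hs0, mcf_shift hD hsq hf, hs1]
        · intro P hP h
          rw [List.length_rotate, hlen]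
          have hgP := (period_iff hD hsq hg P).1 h
          apply hTmin P hP
          have hle : i ≤ T * i := Nat.le_mul_of_pos_left i hTpos
          have hq : stepF^[T * i] f = f := by
            rw [Function.iterate_mul]
            exact Function.iterate_fixed hTf i
          have hback : stepF^[T * i - i] (stepF^[i] f) = f := by
            rw [← Function.iterate_add_apply, Nat.sub_add_cancel hle, hq]
          have h3 := congrArg (stepF^[T * i - i]) hgP
          rw [← Function.iterate_add_apply, add_comm, Function.iterate_add_apply, hback] at h3
          exact h3
      · rintro ⟨s', ⟨i, rfl⟩, -, h1, -⟩
        have hg := iter_good hD hsq hf i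
        refine ⟨stepF^[i] f, equiv_iter f i, hg.1, ?_⟩
        apply mcf_unique hD hsq hg
        intro j
        rw [h1, getD_rotate_mod s hs0, mcf_shift hD hsq hf, hs1]


/-- For a reduced form `h`, the minus continued fraction of `ξ⁺(h)` is purely
periodic; the length of its period equals the number of reduced forms in the class
of `h`, and the values `ξ⁺` of the reduced forms of the class are exactly the numbers
whose minus continued fraction is purely periodic with period a cyclic permutation of
the period of `ξ⁺(h)`. -/
theorem statement18 (m n k : ℤ) (hred : ReducedForm (m, n, k))
    (hpos : 0 < formDisc (m, n, k)) (hsq : ¬ IsSquare (formDisc (m, n, k))) :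
    (∃ s : List ℤ, IsPurelyPeriodicMCF s (xiPlus (m, n, k))) ∧
    ∀ s : List ℤ, IsPurelyPeriodicMCF s (xiPlus (m, n, k)) →
      ({g : ℤ × ℤ × ℤ | SLEquiv (m, n, k) g ∧ ReducedForm g}.ncard = s.length ∧
       {x : ℝ | ∃ g : ℤ × ℤ × ℤ, SLEquiv (m, n, k) g ∧ ReducedForm g ∧ x = xiPlus g}
          = {x : ℝ | ∃ s' : List ℤ, List.IsRotated s s' ∧ IsPurelyPeriodicMCF s' x}) := by
  exact main_aux hpos hsq ⟨hred, rfl⟩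
end
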